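/- arXiv:2107.03855 — 4 statements merged into one kernel-verified Lean document; each statement's English description precedes it below -/
import Mathlib

section
/- There exist a positive integer γ and a positive real x₀ such that for all real numbers x and q satisfying x ≥ x₀ and x^{1/5} < q ≤ x^{1/4}, one has #{a : √x/q < a ≤ √(x/q), P(a) ≤ q, and S(a) ≤ 2^γ √x / q} ≥ √x / (2^γ q log x). -/
/-- `Pmax n` is the largest prime factor of `n`, with the convention `Pmax 1 = 1`. -/
def Pmax (n : ℕ) : ℕ := if n ≤ 1 then 1 else n.primeFactors.sup id

/-- The Schinzel–Szekeres function: if `n = p₁ p₂ ⋯ p_Ω` with `p₁ ≥ p₂ ≥ ⋯ ≥ p_Ω` prime,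
`SS n = max_{1 ≤ k ≤ Ω} p₁ ⋯ p_{k-1} p_k²`, and `SS 1 = 1`.
(`Nat.primeFactorsList n` is the *increasing* list of prime factors with multiplicity;
the value produced for the index `j` is the one for `k = Ω - j`.) -/
def SS (n : ℕ) : ℕ :=
  ((List.range n.primeFactorsList.length).map
    (fun j => (n.primeFactorsList.drop j).headI * (n.primeFactorsList.drop j).prod)).foldr max 1

/-- A chain in the divisor graph: a finite sequence of pairwise distinct positive
integers in which any two consecutive terms are adjacent in the divisor graph
(the smaller divides the larger). -/
def IsDivChain (l : List ℕ) : Prop :=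
  l.Nodup ∧ (∀ n ∈ l, 0 < n) ∧ l.Chain' (fun a b => a ∣ b ∨ b ∣ a)

/-!
Let a random squarefree integer contain each prime `p < n` independently with probability
`1 / (p + 1)`, and kill it at step `m` if `m` exceeds `t` times the part `a` built from the primes
`< m`. For a survivor every prime factor is at most `t` times the part below it, which gives
`SS a ≤ t * a`. Before killing, `log a` minus its mean is a martingale. A killed integer is small,
so killing only pushes the mean deviation of the survivors up to bounded errors; since inserting
three large primes costs a constant factor of probability but makes `log a` exceed its mean by a
multiple of `log n`, the survival probability is `O(1 / log n)`. This controls the second moment,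
and Chebyshev's inequality leaves a positive mass `∑ 1 / a` on the survivors `a ≤ n ^ K`.

A few more large primes move this mass to survivors `a` with `a * n ≤ n ^ h` and
`n ^ (h + 1) ≤ a ^ 2`. Multiplying such an `a` by a prime `p ∈ (z / a, R * z / a]`, where
`n ^ h ≈ z`, gives distinct integers in `(z, R * z]`, about `z / log z` of them, and
`n < p ≤ a` bounds both the largest prime factor and `SS`. Take `z = √x / q`.
-/

section

open Finset Filter

/-- The mean of `log a` for the random squarefree integer `a` that contains each prime `p < n`
independently with probability `1 / (p + 1)`. -/
noncomputable def logMean (n : ℕ) : ℝ := ∑ p ∈ n.primesBelow, Real.log p / (p + 1)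

lemma logMean_succ (n : ℕ) :
    logMean (n + 1) = logMean n + if n.Prime then Real.log n / (n + 1) else 0 := by
  rw [logMean, logMean, Nat.primesBelow_succ]
  split_ifs
  · rw [sum_insert (by simp [Nat.mem_primesBelow]), add_comm]
  · rw [add_zero]

lemma logMean_nonneg (n : ℕ) : 0 ≤ logMean n :=
  sum_nonneg fun p _ ↦ div_nonneg (Real.log_natCast_nonneg p) (by positivity)

lemma logMean_succ_le (n : ℕ) : logMean (n + 1) ≤ logMean n + 1 := by
  rw [logMean_succ]
  split_ifs
  · have : Real.log n / (n + 1) ≤ 1 := by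
      rw [div_le_one (by positivity)]
      linarith [Real.log_le_self n.cast_nonneg]
    linarith
  · linarith

lemma log_factorial_eq_sum_primesLE (n : ℕ) :
    Real.log n.factorial = ∑ p ∈ n.primesLE, n.factorial.factorization p * Real.log p := by
  rw [Real.log_nat_eq_sum_factorization]
  refine Finsupp.sum_of_support_subset _ (fun p hp ↦ ?_) _ (by simp)
  rw [Nat.support_factorization, Nat.mem_primeFactors] at hp
  exact Nat.mem_primesLE.2 ⟨hp.1.dvd_factorial.1 hp.2.1, hp.1⟩

lemma div_sub_one_le_factorization_factorial {p : ℕ} (hp : p.Prime) (n : ℕ) :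
    (n : ℝ) / p - 1 ≤ n.factorial.factorization p := by
  have hle : n / p ≤ n.factorial.factorization p := by
    have hmul := (Nat.factorization_le_iff_dvd (Nat.factorial_ne_zero _)
      n.factorial_ne_zero).2 (Nat.factorial_dvd_factorial (Nat.mul_div_le n p)) p
    rw [Nat.factorization_factorial_mul hp] at hmul
    omega
  have hfloor := Nat.lt_floor_add_one ((n : ℝ) / p)
  rw [Nat.floor_div_eq_div] at hfloor
  linarith [Nat.cast_le (α := ℝ).2 hle]

lemma factorization_factorial_le_div_sub_one {p : ℕ} (hp : p.Prime) (n : ℕ) :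
    (n.factorial.factorization p : ℝ) ≤ n / (p - 1) := by
  have h := Nat.cast_le (α := ℝ).2 (Nat.factorization_factorial_le_div_pred hp n)
  have hdiv := Nat.cast_div_le (α := ℝ) (m := n) (n := p - 1)
  rw [Nat.cast_pred hp.pos] at hdiv
  exact h.trans hdiv

lemma sum_primesLE_log_div_le (n : ℕ) :
    ∑ p ∈ n.primesLE, Real.log p / p ≤ Real.log n + 2 := by
  rcases n.eq_zero_or_pos with rfl | hn
  · simp
  have hn' : (0 : ℝ) < n := Nat.cast_pos.2 hn
  have htheta : ∑ p ∈ n.primesLE, Real.log p ≤ 2 * n := by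
    have h := Chebyshev.theta_le_log4_mul_x n.cast_nonneg
    rw [Chebyshev.theta_eq_sum_primesLE_log] at h
    have hlog : Real.log 4 ≤ 2 := by
      rw [show (4 : ℝ) = 2 ^ 2 by norm_num, Real.log_pow]
      push_cast
      linarith [Real.log_two_lt_d9]
    exact h.trans (by gcongr)
  have hfactorial : Real.log n.factorial ≤ n * Real.log n := by
    rw [← Real.log_pow]
    exact Real.log_le_log (by positivity) (mod_cast Nat.factorial_le_pow n)
  refine le_of_mul_le_mul_left ?_ hn'
  calc n * ∑ p ∈ n.primesLE, Real.log p / p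
      = ∑ p ∈ n.primesLE, ((n : ℝ) / p - 1) * Real.log p + ∑ p ∈ n.primesLE, Real.log p := by
        rw [mul_sum, ← sum_add_distrib]
        exact sum_congr rfl fun p _ ↦ by ring
    _ ≤ Real.log n.factorial + 2 * n := by
        rw [log_factorial_eq_sum_primesLE]
        gcongr with p hp
        exact div_sub_one_le_factorization_factorial (Nat.prime_of_mem_primesLE hp) n
    _ ≤ n * (Real.log n + 2) := by linarith

lemma le_sum_primesLE_log_div_sub_one (n : ℕ) :
    Real.log n - 1 ≤ ∑ p ∈ n.primesLE, Real.log p / (p - 1) := by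
  rcases n.eq_zero_or_pos with rfl | hn
  · simp
  have hn' : (0 : ℝ) < n := Nat.cast_pos.2 hn
  have hstirling : n * Real.log n - n ≤ Real.log n.factorial := by
    have hlog : 0 ≤ Real.log (2 * Real.pi) := Real.log_nonneg (by linarith [Real.pi_gt_three])
    linarith [Stirling.le_log_factorial_stirling hn.ne', Real.log_natCast_nonneg n]
  refine le_of_mul_le_mul_left ?_ hn'
  calc n * (Real.log n - 1) ≤ Real.log n.factorial := by linarith
    _ ≤ ∑ p ∈ n.primesLE, (n : ℝ) / (p - 1) * Real.log p := by
        rw [log_factorial_eq_sum_primesLE]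
        gcongr with p hp
        exact factorization_factorial_le_div_sub_one (Nat.prime_of_mem_primesLE hp) n
    _ = n * ∑ p ∈ n.primesLE, Real.log p / (p - 1) := by
        rw [mul_sum]
        exact sum_congr rfl fun p _ ↦ by ring

lemma log_add_one_div_sub_le {x : ℝ} (hx : 1 ≤ x) :
    Real.log (x + 1) / x - Real.log (x + 1) / (x + 2) ≤
      2 * ((Real.log x + 2) / x) - 2 * ((Real.log (x + 1) + 2) / (x + 1)) := by
  have hx0 : 0 < x := by linarith
  have hlog0 : 0 ≤ Real.log (x + 1) := Real.log_nonneg (by linarith)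
  have hlog : Real.log (x + 1) - Real.log x ≤ 1 / x := by
    rw [← Real.log_div (by positivity) hx0.ne', add_div, div_self hx0.ne', add_comm]
    linarith [Real.log_le_sub_one_of_pos (show 0 < 1 / x + 1 by positivity)]
  have hmul : (x + 1) * (Real.log (x + 1) - Real.log x) ≤ 2 :=
    calc (x + 1) * (Real.log (x + 1) - Real.log x) ≤ (x + 1) * (1 / x) := by gcongr
      _ ≤ 2 := by
          rw [mul_one_div, div_le_iff₀ hx0]
          linarith
  calc Real.log (x + 1) / x - Real.log (x + 1) / (x + 2)
      = 2 * (Real.log (x + 1) / (x * (x + 2))) := by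
        field_simp
        ring
    _ ≤ 2 * (Real.log (x + 1) / (x * (x + 1))) := by gcongr; linarith
    _ ≤ 2 * (((Real.log x + 2) * (x + 1) - x * (Real.log (x + 1) + 2)) / (x * (x + 1))) := by
        gcongr
        linarith
    _ = 2 * ((Real.log x + 2) / x) - 2 * ((Real.log (x + 1) + 2) / (x + 1)) := by
        rw [← mul_sub, div_sub_div _ _ hx0.ne' (by positivity)]

lemma sum_primesLE_log_div_sub_le {n : ℕ} (hn : 1 ≤ n) :
    ∑ p ∈ n.primesLE, (Real.log p / (p - 1) - Real.log p / (p + 1)) ≤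
      4 - 2 * ((Real.log n + 2) / n) := by
  induction n, hn using Nat.le_induction with
  | base => norm_num
  | succ n hn ih =>
    have hlog := Real.log_natCast_nonneg (n + 1)
    have hstep := log_add_one_div_sub_le (x := n) (mod_cast hn)
    rw [Nat.primesLE] at ih ⊢
    push_cast at hlog ⊢
    rw [Nat.primesBelow_succ]
    split_ifs
    · rw [sum_insert (by simp [Nat.mem_primesBelow])]
      push_cast
      rw [add_sub_cancel_right, add_assoc (n : ℝ) 1 1, one_add_one_eq_two]
      linarith
    · have : Real.log (n + 1) / (n + 2) ≤ Real.log (n + 1) / n := by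
        gcongr
        linarith
      linarith

lemma sum_primesLE_log_div_sub_one_le (n : ℕ) :
    ∑ p ∈ n.primesLE, Real.log p / (p - 1) ≤ logMean (n + 1) + 4 := by
  rcases n.eq_zero_or_pos with rfl | hn
  · rw [Nat.primesLE_zero, sum_empty]
    linarith [logMean_nonneg (0 + 1)]
  have := Real.log_natCast_nonneg n
  have htail : 0 ≤ 2 * ((Real.log n + 2) / n) := by positivity
  have hsum := sum_primesLE_log_div_sub_le hn
  rw [sum_sub_distrib] at hsum
  rw [logMean, ← Nat.primesLE]
  linarith

lemma logMean_le_log_add_two (n : ℕ) : logMean n ≤ Real.log n + 2 := by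
  refine le_trans ?_ (sum_primesLE_log_div_le n)
  calc logMean n ≤ ∑ p ∈ n.primesBelow, Real.log p / p := by
        unfold logMean
        gcongr with p hp
        · exact mod_cast (Nat.prime_of_mem_primesBelow hp).pos
        · linarith
    _ ≤ ∑ p ∈ n.primesLE, Real.log p / p := by
        refine sum_le_sum_of_subset_of_nonneg (fun p hp ↦ ?_) fun p _ _ ↦
          div_nonneg (Real.log_natCast_nonneg p) p.cast_nonneg
        rw [Nat.mem_primesBelow] at hp
        exact Nat.mem_primesLE.2 ⟨hp.1.le, hp.2⟩

lemma log_le_logMean_add_six (n : ℕ) : Real.log n ≤ logMean n + 6 := by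
  linarith [le_sum_primesLE_log_div_sub_one n, sum_primesLE_log_div_sub_one_le n,
    logMean_succ_le n]

/-- The sum of `1 / a` over all squarefree `a` whose prime factors are less than `n`, written as an
Euler product; it normalises the weights `1 / a` to probabilities. -/
noncomputable def totalMass (n : ℕ) : ℝ := ∏ p ∈ n.primesBelow, (1 + 1 / (p : ℝ))

lemma totalMass_pos (n : ℕ) : 0 < totalMass n := prod_pos fun _ _ ↦ by positivity

lemma totalMass_succ (n : ℕ) :
    totalMass (n + 1) = totalMass n * if n.Prime then 1 + 1 / (n : ℝ) else 1 := by
  rw [totalMass, totalMass, Nat.primesBelow_succ]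
  split_ifs
  · rw [prod_insert (by simp [Nat.mem_primesBelow]), mul_comm]
  · rw [mul_one]

lemma log_le_prod_primesBelow_one_sub_inv_inv (n : ℕ) :
    Real.log n ≤ ∏ p ∈ n.primesBelow, (1 - (p : ℝ)⁻¹)⁻¹ := by
  obtain _ | k := n
  · simp
  let inv : ℕ →* ℝ :=
    { toFun := fun m ↦ (m : ℝ)⁻¹, map_one' := by simp, map_mul' := by simp [mul_comm] }
  have heuler := (EulerProduct.summable_and_hasSum_smoothNumbers_prod_primesBelow_geometric
    (f := inv) (fun {p} hp ↦ by
      simpa [inv] using inv_lt_one_of_one_lt₀ (Nat.one_lt_cast (α := ℝ).2 hp.one_lt)) (k + 1)).2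
  have hsmooth {m : ℕ} (hm : m ∈ Icc 1 k) : m ∈ (k + 1).smoothNumbers :=
    Nat.mem_smoothNumbers_of_lt (by grind) (by grind)
  calc Real.log (k + 1 : ℕ) ≤ harmonic k := log_add_one_le_harmonic k
    _ = ∑ m ∈ Icc 1 k, (k + 1).smoothNumbers.indicator inv m := by
        rw [harmonic_eq_sum_Icc, Rat.cast_sum]
        exact sum_congr rfl fun m hm ↦ by simp [Set.indicator_of_mem (hsmooth hm), inv]
    _ ≤ ∏ p ∈ (k + 1).primesBelow, (1 - (p : ℝ)⁻¹)⁻¹ :=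
        sum_le_hasSum _ (fun m _ ↦ Set.indicator_nonneg (fun m _ ↦ by simp [inv]) m)
          (hasSum_subtype_iff_indicator.1 heuler)

lemma half_le_prod_primesBelow_one_sub_inv_sq (n : ℕ) :
    1 / 2 ≤ ∏ p ∈ n.primesBelow, (1 - ((p : ℝ) ^ 2)⁻¹) := by
  have hprod (k : ℕ) :
      1 / 2 * (1 + ((k : ℝ) + 1)⁻¹) ≤ ∏ p ∈ (k + 2).primesBelow, (1 - ((p : ℝ) ^ 2)⁻¹) := by
    induction k with
    | zero => norm_num
    | succ k ih =>
      rw [Nat.primesBelow_succ]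
      push_cast
      split_ifs
      · rw [prod_insert (by simp [Nat.mem_primesBelow])]
        have hinv : (((k : ℝ) + 2) ^ 2)⁻¹ ≤ 1 :=
          inv_le_one_of_one_le₀ (one_le_pow₀ (by linarith [k.cast_nonneg (α := ℝ)]))
        calc 1 / 2 * (1 + ((k : ℝ) + 1 + 1)⁻¹)
            = (1 - (((k : ℝ) + 2) ^ 2)⁻¹) * (1 / 2 * (1 + ((k : ℝ) + 1)⁻¹)) := by
              field_simp
              ring
          _ ≤ _ := by
              push_cast
              gcongr
      · refine le_trans ?_ ih
        gcongr
        linarith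
  obtain _ | _ | k := n
  · norm_num
  · norm_num
  · have : (0 : ℝ) ≤ ((k : ℝ) + 1)⁻¹ := by positivity
    linarith [hprod k]

lemma log_div_two_le_totalMass (n : ℕ) : Real.log n / 2 ≤ totalMass n := by
  have hlog := log_le_prod_primesBelow_one_sub_inv_inv n
  calc Real.log n / 2 = Real.log n * (1 / 2) := by ring
    _ ≤ (∏ p ∈ n.primesBelow, (1 - (p : ℝ)⁻¹)⁻¹) *
        ∏ p ∈ n.primesBelow, (1 - ((p : ℝ) ^ 2)⁻¹) :=
      mul_le_mul hlog (half_le_prod_primesBelow_one_sub_inv_sq n) (by norm_num)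
        ((Real.log_natCast_nonneg n).trans hlog)
    _ = totalMass n := by
        rw [← prod_mul_distrib]
        refine prod_congr rfl fun p hp ↦ ?_
        have hp1 : (1 : ℝ) < p := mod_cast (Nat.prime_of_mem_primesBelow hp).one_lt
        have hne : 1 - (p : ℝ)⁻¹ ≠ 0 := (sub_pos.2 (inv_lt_one_of_one_lt₀ hp1)).ne'
        rw [inv_mul_eq_iff_eq_mul₀ hne]
        ring

lemma foldr_max_le_iff {α : Type*} [LinearOrder α] {l : List α} {b B : α} :
    l.foldr max b ≤ B ↔ b ≤ B ∧ ∀ x ∈ l, x ≤ B := by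
  induction l with
  | nil => simp
  | cons y l ih => rw [List.foldr_cons, max_le_iff, ih, List.forall_mem_cons, and_left_comm]

lemma SS_le_iff {n B : ℕ} : SS n ≤ B ↔ 1 ≤ B ∧ ∀ j < n.primeFactorsList.length,
    (n.primeFactorsList.drop j).headI * (n.primeFactorsList.drop j).prod ≤ B := by
  simp only [SS, foldr_max_le_iff, List.forall_mem_map, List.mem_range]

lemma primeFactorsList_mul_prime {a p : ℕ} (hp : p.Prime) (ha : a ∈ (p + 1).smoothNumbers) :
    (a * p).primeFactorsList = a.primeFactorsList ++ [p] := by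
  refine List.Perm.eq_of_sortedLE (Nat.primeFactorsList_sorted _) ?_ ?_
  · rw [List.sortedLE_iff_pairwise, List.pairwise_append]
    refine ⟨(Nat.primeFactorsList_sorted _).pairwise, List.pairwise_singleton _ _, ?_⟩
    simpa [Nat.lt_succ_iff] using (Nat.mem_smoothNumbers.1 ha).2
  · simpa [Nat.primeFactorsList_prime hp] using
      Nat.perm_primeFactorsList_mul (Nat.ne_zero_of_mem_smoothNumbers ha) hp.ne_zero

lemma SS_mul_prime_le_max {a p : ℕ} (hp : p.Prime) (ha : a ∈ (p + 1).smoothNumbers) :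
    SS (a * p) ≤ max (p * SS a) (p * p) := by
  refine SS_le_iff.2 ⟨le_max_of_le_right (Nat.mul_pos hp.pos hp.pos), fun j hj ↦ ?_⟩
  rw [primeFactorsList_mul_prime hp ha] at hj ⊢
  rw [List.length_append, List.length_singleton, Nat.lt_succ_iff_lt_or_eq] at hj
  rcases hj with hj | rfl
  · obtain ⟨r, l, hrl⟩ := List.exists_cons_of_ne_nil (mt List.drop_eq_nil_iff.1 hj.not_ge)
    have hterm := (SS_le_iff.1 le_rfl).2 j hj
    rw [List.drop_append_of_le_length hj.le, hrl, List.cons_append, List.headI_cons,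
      ← List.cons_append, List.prod_append, List.prod_singleton, ← mul_assoc, mul_comm _ p]
    rw [hrl, List.headI_cons] at hterm
    exact le_max_of_le_left (Nat.mul_le_mul_left p hterm)
  · rw [List.drop_left, List.headI_cons, List.prod_singleton]
    exact le_max_right _ _

lemma SS_mul_prime_le {t a p : ℕ} (hp : p.Prime) (ha : a ∈ (p + 1).smoothNumbers)
    (hS : SS a ≤ t * a) (hpt : p ≤ t * a) : SS (a * p) ≤ t * (a * p) :=
  (SS_mul_prime_le_max hp ha).trans <|
    calc max (p * SS a) (p * p) = p * max (SS a) p := Nat.mul_max_mul_left p _ _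
      _ ≤ p * (t * a) := by gcongr; exact max_le hS hpt
      _ = t * (a * p) := by ring

lemma Pmax_mul_prime {a p : ℕ} (hp : p.Prime) (ha : a ∈ (p + 1).smoothNumbers) :
    Pmax (a * p) = p := by
  have ha0 := Nat.ne_zero_of_mem_smoothNumbers ha
  have hlt : 1 < a * p := hp.one_lt.trans_le (Nat.le_mul_of_pos_left p (by omega))
  rw [Pmax, if_neg hlt.not_ge, Nat.primeFactors_mul ha0 hp.ne_zero, hp.primeFactors, sup_union,
    sup_singleton, id, sup_eq_right]
  exact Finset.sup_le fun r hr ↦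
    Nat.lt_succ_iff.1 (Nat.mem_smoothNumbers'.1 ha r (Nat.prime_of_mem_primeFactors hr)
      (Nat.dvd_of_mem_primeFactors hr))

/-- The squarefree integers built from primes `< n` that survive when, for each `m < n`, an integer
`a` whose part `b` made of the primes `< m` satisfies `t * b < m` is killed. These are integers
whose prime factors are spread densely enough for the Schinzel–Szekeres function to be at most
`t * a`. -/
def survivors (t : ℕ) : ℕ → Finset ℕ
  | 0 => {1}
  | n + 1 =>
    let alive := {a ∈ survivors t n | n ≤ t * a}
    if n.Prime then alive ∪ alive.image (· * n) else alive

section Survivors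

variable {t n a : ℕ}

lemma mem_survivors_succ : a ∈ survivors t (n + 1) ↔
    ∃ b ∈ survivors t n, n ≤ t * b ∧ (a = b ∨ n.Prime ∧ a = b * n) := by
  rw [survivors]
  split_ifs with hn
  · simp only [mem_union, mem_image, mem_filter, hn, true_and]
    grind
  · simp only [mem_filter, hn, false_and, or_false]
    grind

lemma mem_smoothNumbers_of_mem_survivors (ha : a ∈ survivors t n) : a ∈ n.smoothNumbers := by
  induction n generalizing a with
  | zero => simpa [survivors] using ha
  | succ n ih =>
    obtain ⟨b, hb, -, rfl | ⟨hn, rfl⟩⟩ := mem_survivors_succ.1 ha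
    · exact Nat.smoothNumbers_mono n.le_succ (ih hb)
    · exact Nat.mul_mem_smoothNumbers (Nat.smoothNumbers_mono n.le_succ (ih hb))
        (Nat.mem_smoothNumbers_of_lt hn.pos n.lt_succ_self)

lemma pos_of_mem_survivors (ha : a ∈ survivors t n) : 0 < a :=
  Nat.pos_of_ne_zero (Nat.ne_zero_of_mem_smoothNumbers (mem_smoothNumbers_of_mem_survivors ha))

lemma not_dvd_of_mem_survivors (hn : n.Prime) (ha : a ∈ survivors t n) : ¬ n ∣ a := fun hdvd ↦
  (Nat.mem_smoothNumbers'.1 (mem_smoothNumbers_of_mem_survivors ha) n hn hdvd).false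

lemma le_mul_add_one_of_mem_survivors (ha : a ∈ survivors t n) : n ≤ t * a + 1 := by
  cases n with
  | zero => omega
  | succ n =>
    obtain ⟨b, -, hb, rfl | ⟨hn, rfl⟩⟩ := mem_survivors_succ.1 ha
    · omega
    · rw [← mul_assoc]
      have := Nat.le_mul_of_pos_right (t * b) hn.pos
      omega

lemma SS_le_of_mem_survivors (ht : 1 ≤ t) (ha : a ∈ survivors t n) : SS a ≤ t * a := by
  induction n generalizing a with
  | zero =>
    obtain rfl : a = 1 := by simpa [survivors] using ha
    simpa [SS] using ht
  | succ n ih =>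
    obtain ⟨b, hb, hnb, rfl | ⟨hn, rfl⟩⟩ := mem_survivors_succ.1 ha
    · exact ih hb
    · exact SS_mul_prime_le hn (Nat.smoothNumbers_mono n.le_succ
        (mem_smoothNumbers_of_mem_survivors hb)) (ih hb) hnb

lemma mul_prime_mem_survivors {p : ℕ} (ha : a ∈ survivors t n) (hp : p.Prime) (hpn : p < n)
    (hpa : ¬ p ∣ a) : a * p ∈ survivors t n := by
  induction n generalizing a with
  | zero => omega
  | succ n ih =>
    obtain ⟨b, hb, hnb, hab⟩ := mem_survivors_succ.1 ha
    have hba : b ∣ a := by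
      obtain rfl | ⟨-, rfl⟩ := hab
      exacts [dvd_rfl, dvd_mul_right b n]
    obtain hlt | rfl := Nat.lt_succ_iff_lt_or_eq.1 hpn
    · have hbp := ih hb hlt fun h ↦ hpa (h.trans hba)
      have hnbp : n ≤ t * (b * p) := by
        rw [← mul_assoc]
        exact hnb.trans (Nat.le_mul_of_pos_right _ hp.pos)
      refine mem_survivors_succ.2 ⟨b * p, hbp, hnbp, ?_⟩
      obtain rfl | ⟨hn, rfl⟩ := hab
      exacts [Or.inl rfl, Or.inr ⟨hn, mul_right_comm b n p⟩]
    · obtain rfl | ⟨-, rfl⟩ := hab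
      · exact mem_survivors_succ.2 ⟨a, hb, hnb, Or.inr ⟨hp, rfl⟩⟩
      · exact absurd (dvd_mul_left p b) hpa

lemma sum_survivors_succ (f : ℕ → ℝ) : ∑ a ∈ survivors t (n + 1), f a =
    ∑ a ∈ survivors t n with n ≤ t * a, (f a + if n.Prime then f (a * n) else 0) := by
  rw [survivors]
  split_ifs with hn
  · rw [sum_union, sum_image, sum_add_distrib]
    · exact fun a _ b _ h ↦ Nat.eq_of_mul_eq_mul_right hn.pos h
    · refine disjoint_left.2 fun a ha hmul ↦ ?_
      obtain ⟨b, -, rfl⟩ := mem_image.1 hmul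
      exact not_dvd_of_mem_survivors hn (mem_filter.1 ha).1 (dvd_mul_left n b)
  · simp only [add_zero]

end Survivors

/-- The expectation of `f a` on the event that the random squarefree integer `a` built from the
primes `< n` survives, so that `survivorMean t n 1` is the survival probability. -/
noncomputable def survivorMean (t n : ℕ) (f : ℕ → ℝ) : ℝ :=
  (∑ a ∈ survivors t n, f a / a) / totalMass n

/-- The conditional expectation of `f` after the decision about `n`, given that the part of the
random integer composed of smaller primes is `a`. -/
noncomputable def stepMean (n : ℕ) (f : ℕ → ℝ) (a : ℕ) : ℝ :=
  if n.Prime then (n * f a + f (a * n)) / (n + 1) else f a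

/-- The deviation of `log a` from its mean, a martingale in `n` for the random integer `a`. -/
noncomputable def logDev (n a : ℕ) : ℝ := Real.log a - logMean n

section Expectation

variable {t n : ℕ} {f g : ℕ → ℝ}

lemma survivorMean_mono (h : ∀ a ∈ survivors t n, f a ≤ g a) :
    survivorMean t n f ≤ survivorMean t n g := by
  have := totalMass_pos n
  unfold survivorMean
  gcongr with a ha
  exact h a ha

lemma survivorMean_add (f g : ℕ → ℝ) :
    survivorMean t n (fun a ↦ f a + g a) = survivorMean t n f + survivorMean t n g := by
  simp only [survivorMean, add_div, sum_add_distrib]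

lemma survivorMean_const_mul (c : ℝ) (f : ℕ → ℝ) :
    survivorMean t n (fun a ↦ c * f a) = c * survivorMean t n f := by
  simp only [survivorMean, mul_div_assoc, ← mul_sum]

lemma survivorMean_zero (t : ℕ) (f : ℕ → ℝ) : survivorMean t 0 f = f 1 := by
  simp [survivorMean, survivors, totalMass]

lemma survivorMean_succ (t n : ℕ) (f : ℕ → ℝ) : survivorMean t (n + 1) f =
    survivorMean t n (fun a ↦ if n ≤ t * a then stepMean n f a else 0) := by
  have hterm (a : ℕ) : (f a / a + if n.Prime then f (a * n) / (a * n : ℕ) else 0) /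
      (if n.Prime then 1 + 1 / (n : ℝ) else 1) = stepMean n f a / a := by
    unfold stepMean
    split_ifs with hn
    · have : (0 : ℝ) < n := mod_cast hn.pos
      push_cast
      field_simp
    · simp
  rw [survivorMean, sum_survivors_succ, totalMass_succ, mul_comm, ← div_div, sum_div,
    sum_congr rfl fun a _ ↦ hterm a, sum_filter, survivorMean]
  congr! 2 with a
  split_ifs <;> simp

lemma stepMean_logDev_add (n : ℕ) (c : ℝ) {a : ℕ} (ha : 0 < a) :
    stepMean n (fun a ↦ logDev (n + 1) a + c) a = logDev n a + c := by
  simp only [stepMean, logDev, logMean_succ]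
  split_ifs with hn
  · have hn0 : (0 : ℝ) < n := mod_cast hn.pos
    have ha0 : (0 : ℝ) < a := mod_cast ha
    push_cast
    rw [Real.log_mul ha0.ne' hn0.ne']
    field_simp
    ring
  · ring

lemma stepMean_logDev_sq (n : ℕ) {a : ℕ} (ha : 0 < a) :
    stepMean n (fun a ↦ logDev (n + 1) a ^ 2) a =
      logDev n a ^ 2 + if n.Prime then n * (Real.log n / (n + 1)) ^ 2 else 0 := by
  simp only [stepMean, logDev, logMean_succ]
  split_ifs with hn
  · have hn0 : (0 : ℝ) < n := mod_cast hn.pos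
    have ha0 : (0 : ℝ) < a := mod_cast ha
    push_cast
    rw [Real.log_mul ha0.ne' hn0.ne']
    field_simp
    ring
  · simp

lemma log_le_add_log_of_mem_survivors {a : ℕ} (ht : 0 < t) (ha : a ∈ survivors t n) :
    Real.log n ≤ Real.log t + 1 + Real.log a := by
  have hta : 0 < t * a := Nat.mul_pos ht (pos_of_mem_survivors ha)
  have hle : n ≤ 2 * (t * a) := by
    have := le_mul_add_one_of_mem_survivors ha
    omega
  have ha0 : (0 : ℝ) < a := mod_cast pos_of_mem_survivors ha
  have ht0 : (0 : ℝ) < t := mod_cast ht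
  have hlog : Real.log (2 * (t * a)) = Real.log 2 + (Real.log t + Real.log a) := by
    rw [Real.log_mul two_ne_zero (by positivity), Real.log_mul ht0.ne' ha0.ne']
  have hn : Real.log n ≤ Real.log (2 * (t * a)) := by
    rcases n.eq_zero_or_pos with rfl | hn
    · rw [Nat.cast_zero, Real.log_zero]
      exact Real.log_nonneg (mod_cast (by omega : 1 ≤ 2 * (t * a)))
    · exact Real.log_le_log (mod_cast hn) (mod_cast hle)
  linarith [Real.log_two_lt_d9]

-- Killing removes values of `logDev n a + (log t - 6)` that are at most `0`.
lemma log_sub_six_le_survivorMean (ht : 0 < t) (n : ℕ) :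
    Real.log t - 6 ≤ survivorMean t n (fun a ↦ logDev n a + (Real.log t - 6)) := by
  induction n with
  | zero => simp [survivorMean_zero, logDev, logMean]
  | succ n ih =>
    rw [survivorMean_succ]
    refine ih.trans (survivorMean_mono fun a ha ↦ ?_)
    have ha0 := pos_of_mem_survivors ha
    split_ifs with hkill
    · rw [stepMean_logDev_add n _ ha0]
    · have hlog : Real.log t + Real.log a ≤ Real.log n := by
        rw [← Real.log_mul (by positivity) (by positivity)]
        exact Real.log_le_log (by positivity) (mod_cast (not_le.1 hkill).le)
      unfold logDev
      linarith [log_le_logMean_add_six n]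

-- Killing removes values of `logDev n a + (log t + 3)` that are at least `0`.
lemma survivorMean_le_log_add_three (ht : 0 < t) (n : ℕ) :
    survivorMean t n (fun a ↦ logDev n a + (Real.log t + 3)) ≤ Real.log t + 3 := by
  induction n with
  | zero => simp [survivorMean_zero, logDev, logMean]
  | succ n ih =>
    rw [survivorMean_succ]
    refine (survivorMean_mono fun a ha ↦ ?_).trans ih
    split_ifs
    · rw [stepMean_logDev_add n _ (pos_of_mem_survivors ha)]
    · unfold logDev
      linarith [log_le_add_log_of_mem_survivors ht ha, logMean_le_log_add_two n]

lemma survivorMean_one_le_one (t n : ℕ) : survivorMean t n (fun _ ↦ 1) ≤ 1 := by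
  induction n with
  | zero => rw [survivorMean_zero]
  | succ n ih =>
    rw [survivorMean_succ]
    refine (survivorMean_mono fun a _ ↦ ?_).trans ih
    have hstep : stepMean n (fun _ ↦ 1) a = 1 := by
      unfold stepMean
      split_ifs
      · field_simp
      · rfl
    split_ifs
    exacts [hstep.le, zero_le_one]

lemma survivorMean_logDev_sq_le {C : ℝ}
    (h : ∀ n : ℕ, Real.log n * survivorMean t n (fun _ ↦ 1) ≤ C) (n : ℕ) :
    survivorMean t n (fun a ↦ logDev n a ^ 2) ≤ C * logMean n := by
  induction n with
  | zero => simp [survivorMean_zero, logDev, logMean]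
  | succ n ih =>
    have hlog := Real.log_natCast_nonneg n
    rw [survivorMean_succ, logMean_succ, mul_add]
    set w : ℝ := if n.Prime then Real.log n / (n + 1) else 0 with hw
    have : 0 ≤ w := by rw [hw]; split_ifs <;> positivity
    have hstep {a : ℕ} (ha : 0 < a) :
        stepMean n (fun a ↦ logDev (n + 1) a ^ 2) a ≤ logDev n a ^ 2 + Real.log n * w * 1 := by
      rw [stepMean_logDev_sq n ha, hw]
      split_ifs
      · have : (n : ℝ) * (Real.log n / (n + 1)) ≤ Real.log n := by
          rw [mul_div_assoc', div_le_iff₀ (by positivity)]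
          linarith
        rw [mul_one, sq (Real.log n / _), ← mul_assoc (n : ℝ)]
        gcongr
      · simp
    calc survivorMean t n
          (fun a ↦ if n ≤ t * a then stepMean n (fun a ↦ logDev (n + 1) a ^ 2) a else 0)
        ≤ survivorMean t n (fun a ↦ logDev n a ^ 2 + Real.log n * w * 1) := by
          refine survivorMean_mono fun a ha ↦ ?_
          split_ifs
          · exact hstep (pos_of_mem_survivors ha)
          · positivity
      _ = survivorMean t n (fun a ↦ logDev n a ^ 2) +
            Real.log n * survivorMean t n (fun _ ↦ 1) * w := by
          rw [survivorMean_add, survivorMean_const_mul]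
          ring
      _ ≤ C * logMean n + C * w := by
          gcongr
          exact h n

end Expectation

/-- The primes in `(n ^ (3 / 4), n)`. -/
def largePrimes (n : ℕ) : Finset ℕ := {p ∈ n.primesBelow | n ^ 3 < p ^ 4}

/-- The number of prime factors of `a` in `(n ^ (3 / 4), n)`, without multiplicity. -/
def largePrimeCount (n a : ℕ) : ℕ := #{p ∈ largePrimes n | p ∣ a}

section LargePrimes

variable {n a p k : ℕ}

lemma mem_largePrimes : p ∈ largePrimes n ↔ p < n ∧ p.Prime ∧ n ^ 3 < p ^ 4 := by
  simp [largePrimes, Nat.mem_primesBelow, and_assoc]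

lemma largePrimeCount_mul_prime (hp : p ∈ largePrimes n) (hpa : ¬ p ∣ a) :
    largePrimeCount n (a * p) = largePrimeCount n a + 1 := by
  have hpp := (mem_largePrimes.1 hp).2.1
  have hdiv : {q ∈ largePrimes n | q ∣ a * p} = insert p {q ∈ largePrimes n | q ∣ a} := by
    ext q
    rw [mem_insert, mem_filter, mem_filter]
    refine ⟨fun ⟨hq, hqap⟩ ↦ ?_, ?_⟩
    · have hqp := (mem_largePrimes.1 hq).2.1
      rcases hqp.dvd_mul.1 hqap with h | h
      · exact Or.inr ⟨hq, h⟩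
      · exact Or.inl ((Nat.prime_dvd_prime_iff_eq hqp hpp).1 h)
    · rintro (rfl | ⟨hq, hqa⟩)
      exacts [⟨hp, dvd_mul_left _ a⟩, ⟨hq, hqa.mul_right p⟩]
  rw [largePrimeCount, hdiv, card_insert_of_notMem (by simp [hpa]), largePrimeCount]

lemma pow_three_mul_le_pow_four (ha : 0 < a) (hn : 0 < n) (hk : k ≤ largePrimeCount n a) :
    n ^ (3 * k) ≤ a ^ 4 := by
  have hdvd : ∏ p ∈ largePrimes n with p ∣ a, p ∣ a :=
    prod_primes_dvd a (fun p hp ↦ (mem_largePrimes.1 (mem_filter.1 hp).1).2.1.prime)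
      fun p hp ↦ (mem_filter.1 hp).2
  calc n ^ (3 * k) ≤ n ^ (3 * largePrimeCount n a) := by gcongr
    _ = ∏ p ∈ largePrimes n with p ∣ a, n ^ 3 := by rw [prod_const, ← pow_mul, largePrimeCount]
    _ ≤ ∏ p ∈ largePrimes n with p ∣ a, p ^ 4 :=
        prod_le_prod' fun p hp ↦ (mem_largePrimes.1 (mem_filter.1 hp).1).2.2.le
    _ = (∏ p ∈ largePrimes n with p ∣ a, p) ^ 4 := prod_pow ..
    _ ≤ a ^ 4 := Nat.pow_le_pow_left (Nat.le_of_dvd ha hdvd) 4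

lemma logMean_le_sum_largePrimes_add (n : ℕ) :
    logMean n ≤
      ∑ p ∈ largePrimes n, Real.log p / (p + 1) + logMean ((n ^ 3).sqrt.sqrt + 1) := by
  rw [logMean, ← sum_filter_add_sum_filter_not n.primesBelow (fun p ↦ n ^ 3 < p ^ 4),
    ← largePrimes, logMean]
  refine add_le_add le_rfl (sum_le_sum_of_subset_of_nonneg (fun p hp ↦ ?_) fun p _ _ ↦
    div_nonneg (Real.log_natCast_nonneg p) (by positivity))
  rw [mem_filter, Nat.mem_primesBelow] at hp
  refine Nat.mem_primesBelow.2 ⟨Nat.lt_succ_of_le ?_, hp.1.2⟩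
  rw [Nat.le_sqrt', Nat.le_sqrt', ← pow_mul]
  exact not_lt.1 hp.2

lemma log_sqrt_sqrt_pow_three_add_one_le (n : ℕ) :
    Real.log ((n ^ 3).sqrt.sqrt + 1 : ℕ) ≤ 1 + 3 / 4 * Real.log n := by
  rcases n.eq_zero_or_pos with rfl | hn
  · simp
  have : (0 : ℝ) < n := mod_cast hn
  set s := (n ^ 3).sqrt.sqrt with hs
  have hs1 : 1 ≤ s := by
    rw [hs, Nat.le_sqrt', Nat.le_sqrt', ← pow_mul, one_pow]
    exact Nat.one_le_pow _ _ hn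
  have hs0 : (0 : ℝ) < s := mod_cast hs1
  have hs4 : s ^ 4 ≤ n ^ 3 := by
    calc s ^ 4 = (s ^ 2) ^ 2 := by ring
      _ ≤ (n ^ 3).sqrt ^ 2 := Nat.pow_le_pow_left (Nat.sqrt_le' _) 2
      _ ≤ n ^ 3 := Nat.sqrt_le' _
  have hlog : 4 * Real.log s ≤ 3 * Real.log n := by
    have := Real.log_le_log (by positivity) (show (s : ℝ) ^ 4 ≤ (n : ℝ) ^ 3 from mod_cast hs4)
    simpa only [Real.log_pow, Nat.cast_ofNat] using this
  have hlog_add : Real.log (s + 1 : ℕ) ≤ Real.log 2 + Real.log s := by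
    rw [← Real.log_mul two_ne_zero hs0.ne']
    exact Real.log_le_log (by positivity) (mod_cast (by omega : s + 1 ≤ 2 * s))
  linarith [Real.log_two_lt_d9]

lemma log_div_four_sub_nine_le_sum_largePrimes (n : ℕ) :
    Real.log n / 4 - 9 ≤ ∑ p ∈ largePrimes n, Real.log n * (1 / p) := by
  have hmean : Real.log n / 4 - 9 ≤ ∑ p ∈ largePrimes n, Real.log p / (p + 1) := by
    linarith [log_le_logMean_add_six n, logMean_le_sum_largePrimes_add n,
      logMean_le_log_add_two ((n ^ 3).sqrt.sqrt + 1), log_sqrt_sqrt_pow_three_add_one_le n]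
  refine hmean.trans (sum_le_sum fun p hp ↦ ?_)
  obtain ⟨hpn, hpp, -⟩ := mem_largePrimes.1 hp
  have hp0 : (0 : ℝ) < p := mod_cast hpp.pos
  rw [mul_one_div]
  gcongr
  linarith

lemma sum_largePrimes_dvd_le (n a : ℕ) :
    ∑ p ∈ largePrimes n with p ∣ a, Real.log n * (1 / p) ≤ 2 * largePrimeCount n a := by
  rw [mul_comm, largePrimeCount, ← nsmul_eq_mul]
  refine sum_le_card_nsmul _ _ _ fun p hp ↦ ?_
  obtain ⟨hpn, hpp, hnp⟩ := mem_largePrimes.1 (mem_filter.1 hp).1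
  have hp0 : (0 : ℝ) < p := mod_cast hpp.pos
  have hle : n ≤ p ^ 2 := by
    rw [← Nat.pow_le_pow_iff_left two_ne_zero, ← pow_mul]
    exact (Nat.pow_le_pow_right (by omega) (by norm_num)).trans hnp.le
  have hlog : Real.log n ≤ 2 * Real.log p := by
    have hn0 : (0 : ℝ) < n := mod_cast hpp.pos.trans hpn
    simpa using Real.log_le_log hn0 (show (n : ℝ) ≤ (p : ℝ) ^ 2 from mod_cast hle)
  rw [mul_one_div, div_le_iff₀ hp0]
  linarith [Real.log_le_self hp0.le]

lemma one_div_eight_le_sum_largePrimes_not_dvd (hn : 8 * (9 + 2 * k) ≤ Real.log n)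
    (hk : largePrimeCount n a ≤ k) :
    1 / 8 ≤ ∑ p ∈ largePrimes n with ¬ p ∣ a, 1 / (p : ℝ) := by
  have hlog : 0 < Real.log n := lt_of_lt_of_le (by positivity) hn
  have hk' : (largePrimeCount n a : ℝ) ≤ k := mod_cast hk
  have hsplit := sum_filter_add_sum_filter_not (largePrimes n) (· ∣ a)
    fun p ↦ Real.log n * (1 / (p : ℝ))
  refine le_of_mul_le_mul_left ?_ hlog
  rw [mul_sum]
  linarith [log_div_four_sub_nine_le_sum_largePrimes n, sum_largePrimes_dvd_le n a]

end LargePrimes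

lemma sum_one_div_mul_sum_not_dvd_le {A B L : Finset ℕ} (hL : ∀ p ∈ L, 0 < p)
    (h : ∀ a ∈ A, ∀ p ∈ L, ¬ p ∣ a → a * p ∈ B) :
    ∑ a ∈ A, 1 / (a : ℝ) * ∑ p ∈ L with ¬ p ∣ a, 1 / (p : ℝ) ≤
      ∑ b ∈ B, #{p ∈ L | p ∣ b} * (1 / (b : ℝ)) := by
  calc ∑ a ∈ A, 1 / (a : ℝ) * ∑ p ∈ L with ¬ p ∣ a, 1 / (p : ℝ)
      = ∑ p ∈ L, ∑ a ∈ A with ¬ p ∣ a, 1 / ((a * p : ℕ) : ℝ) := by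
        simp only [sum_filter, mul_sum]
        rw [sum_comm]
        refine sum_congr rfl fun p _ ↦ sum_congr rfl fun a _ ↦ ?_
        split_ifs
        · rw [mul_zero]
        · rw [one_div_mul_one_div, Nat.cast_mul]
    _ ≤ ∑ p ∈ L, ∑ b ∈ B with p ∣ b, 1 / (b : ℝ) := by
        refine sum_le_sum fun p hp ↦ ?_
        rw [← sum_image (g := (· * p)) (f := fun b : ℕ ↦ 1 / (b : ℝ))
          fun a _ b _ hab ↦ Nat.eq_of_mul_eq_mul_right (hL p hp) hab]
        refine sum_le_sum_of_subset_of_nonneg (image_subset_iff.2 fun a ha ↦ ?_)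
          fun b _ _ ↦ by positivity
        rw [mem_filter] at ha ⊢
        exact ⟨h a ha.1 p hp ha.2, dvd_mul_left p a⟩
    _ = ∑ b ∈ B, #{p ∈ L | p ∣ b} * (1 / (b : ℝ)) := by
        simp only [sum_filter]
        rw [sum_comm]
        simp only [← sum_filter, sum_const, nsmul_eq_mul]

/-- The sum of `1 / a` over the survivors `a ≤ X` with at least `k` prime factors in
`(n ^ (3 / 4), n)`. -/
noncomputable def largePrimeMass (t n k X : ℕ) : ℝ :=
  ∑ a ∈ survivors t n with a ≤ X ∧ k ≤ largePrimeCount n a, 1 / (a : ℝ)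

section LargePrimeMass

variable {t n k X : ℕ}

lemma sum_largePrimeCount_eq_le (hn : 8 * (9 + 2 * k) ≤ Real.log n) :
    ∑ a ∈ survivors t n with a ≤ X ∧ largePrimeCount n a = k, 1 / (a : ℝ) ≤
      8 * (k + 1) * largePrimeMass t n (k + 1) (X * n) := by
  set A := {a ∈ survivors t n | a ≤ X ∧ largePrimeCount n a = k}
  set B := {b ∈ survivors t n | b ≤ X * n ∧ largePrimeCount n b = k + 1}
  have hAB : ∀ a ∈ A, ∀ p ∈ largePrimes n, ¬ p ∣ a → a * p ∈ B := by
    intro a ha p hp hpa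
    obtain ⟨hsurv, haX, hak⟩ := mem_filter.1 ha
    obtain ⟨hpn, hpp, -⟩ := mem_largePrimes.1 hp
    exact mem_filter.2 ⟨mul_prime_mem_survivors hsurv hpp hpn hpa, Nat.mul_le_mul haX hpn.le,
      by rw [largePrimeCount_mul_prime hp hpa, hak]⟩
  have hcount : ∑ a ∈ A, 1 / (a : ℝ) * (1 / 8) ≤ (k + 1) * ∑ b ∈ B, 1 / (b : ℝ) := by
    calc ∑ a ∈ A, 1 / (a : ℝ) * (1 / 8)
        ≤ ∑ a ∈ A, 1 / (a : ℝ) * ∑ p ∈ largePrimes n with ¬ p ∣ a, 1 / (p : ℝ) := by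
          gcongr with a ha
          exact one_div_eight_le_sum_largePrimes_not_dvd hn (mem_filter.1 ha).2.2.le
      _ ≤ ∑ b ∈ B, largePrimeCount n b * (1 / (b : ℝ)) :=
          sum_one_div_mul_sum_not_dvd_le (fun p hp ↦ (mem_largePrimes.1 hp).2.1.pos) hAB
      _ = (k + 1) * ∑ b ∈ B, 1 / (b : ℝ) := by
          rw [mul_sum]
          refine sum_congr rfl fun b hb ↦ ?_
          rw [(mem_filter.1 hb).2.2, Nat.cast_succ]
  have hB : ∑ b ∈ B, 1 / (b : ℝ) ≤ largePrimeMass t n (k + 1) (X * n) :=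
    sum_le_sum_of_subset_of_nonneg
      (monotone_filter_right _ fun b _ hb ↦ ⟨hb.1, hb.2.ge⟩) fun _ _ _ ↦ by positivity
  have hkB := mul_le_mul_of_nonneg_left hB (by positivity : (0 : ℝ) ≤ k + 1)
  rw [← sum_mul] at hcount
  linarith

lemma largePrimeMass_le_succ (hn : 8 * (9 + 2 * k) ≤ Real.log n) :
    largePrimeMass t n k X ≤ (1 + 8 * (k + 1)) * largePrimeMass t n (k + 1) (X * n) := by
  have hn1 : 1 ≤ n := by
    rw [Nat.one_le_iff_ne_zero]
    rintro rfl
    rw [Nat.cast_zero, Real.log_zero] at hn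
    exact absurd hn (not_le.2 (by positivity))
  have hsplit : largePrimeMass t n k X ≤
      ∑ a ∈ survivors t n with a ≤ X ∧ largePrimeCount n a = k, 1 / (a : ℝ) +
        largePrimeMass t n (k + 1) (X * n) := by
    rw [largePrimeMass, largePrimeMass]
    rw [← sum_union_inter]
    refine le_add_of_le_of_nonneg (sum_le_sum_of_subset_of_nonneg (fun a ha ↦ ?_)
      fun _ _ _ ↦ by positivity) (sum_nonneg fun _ _ ↦ by positivity)
    rw [mem_filter] at ha
    have := ha.2.1.trans (Nat.le_mul_of_pos_right X hn1)
    simp only [mem_union, mem_filter, ha, this, true_and]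
    omega
  linarith [sum_largePrimeCount_eq_le (t := t) (X := X) hn]

lemma exists_largePrimeMass_zero_le (k : ℕ) :
    ∃ B : ℝ, 0 < B ∧ ∀ t n X : ℕ, 8 * (9 + 2 * k) ≤ Real.log n →
      largePrimeMass t n 0 X ≤ B * largePrimeMass t n k (X * n ^ k) := by
  induction k with
  | zero => exact ⟨1, one_pos, fun t n X _ ↦ by simp⟩
  | succ k ih =>
    obtain ⟨B, hB, h⟩ := ih
    refine ⟨B * (1 + 8 * (k + 1)), by positivity, fun t n X hn ↦ ?_⟩
    have hn' : 8 * (9 + 2 * k) ≤ Real.log n := by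
      push_cast at hn
      linarith
    calc largePrimeMass t n 0 X ≤ B * largePrimeMass t n k (X * n ^ k) := h t n X hn'
      _ ≤ B * ((1 + 8 * (k + 1)) * largePrimeMass t n (k + 1) (X * n ^ k * n)) := by
          gcongr
          exact largePrimeMass_le_succ hn'
      _ = B * (1 + 8 * (k + 1)) * largePrimeMass t n (k + 1) (X * n ^ (k + 1)) := by
          rw [mul_assoc X, ← pow_succ, mul_assoc]

end LargePrimeMass

section SurvivalProbability

variable {t n a : ℕ}

lemma survivorMean_ite (t n k X : ℕ) :
    survivorMean t n (fun a ↦ if a ≤ X ∧ k ≤ largePrimeCount n a then 1 else 0) =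
      largePrimeMass t n k X / totalMass n := by
  simp only [survivorMean, largePrimeMass, sum_filter, ite_div, zero_div]

lemma largePrimeMass_zero_eq (t n X : ℕ) :
    largePrimeMass t n 0 X =
      totalMass n * survivorMean t n (fun a ↦ if a ≤ X then 1 else 0) := by
  have h := survivorMean_ite t n 0 X
  simp only [Nat.zero_le, and_true] at h
  rw [h, mul_div_cancel₀ _ (totalMass_pos n).ne']

lemma log_le_logDev_add_of_three_le_largePrimeCount (t : ℕ) (ha : 0 < a) (hn : 0 < n)
    (hk : 3 ≤ largePrimeCount n a) : Real.log n ≤ logDev n a + (Real.log t + 3) := by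
  have : (0 : ℝ) < n := mod_cast hn
  have hpow : (n : ℝ) ^ 9 ≤ (a : ℝ) ^ 4 := mod_cast pow_three_mul_le_pow_four ha hn hk
  have hlog : 9 * Real.log n ≤ 4 * Real.log a := by
    simpa only [Real.log_pow, Nat.cast_ofNat] using Real.log_le_log (by positivity) hpow
  unfold logDev
  linarith [logMean_le_log_add_two n, Real.log_natCast_nonneg n, Real.log_natCast_nonneg t]

lemma log_mul_survivorMean_le (ht : 0 < t) (n : ℕ) :
    Real.log n * survivorMean t n
      (fun a ↦ if 3 ≤ largePrimeCount n a then 1 else 0) ≤ Real.log t + 3 := by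
  rcases n.eq_zero_or_pos with rfl | hn
  · rw [Nat.cast_zero, Real.log_zero, zero_mul]
    linarith [Real.log_natCast_nonneg t]
  rw [← survivorMean_const_mul]
  refine (survivorMean_mono fun a ha ↦ ?_).trans (survivorMean_le_log_add_three ht n)
  split_ifs with hk
  · rw [mul_one]
    exact log_le_logDev_add_of_three_le_largePrimeCount t (pos_of_mem_survivors ha) hn hk
  · unfold logDev
    linarith [log_le_add_log_of_mem_survivors ht ha, logMean_le_log_add_two n]

-- Three further large primes lift a survivor far above the mean of `log a`, so the upper bound on
-- the mean deviation of survivors is an upper bound on the survival probability.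
lemma exists_log_mul_survivorMean_one_le (ht : 0 < t) :
    ∃ C : ℝ, 0 ≤ C ∧ ∀ n : ℕ, Real.log n * survivorMean t n (fun _ ↦ 1) ≤ C := by
  obtain ⟨B, hB, hshift⟩ := exists_largePrimeMass_zero_le 3
  refine ⟨max 120 (B * (Real.log t + 3)), by positivity, fun n ↦ ?_⟩
  rcases lt_or_ge (Real.log n) 120 with hn | hn
  · have := Real.log_natCast_nonneg n
    calc Real.log n * survivorMean t n (fun _ ↦ 1) ≤ Real.log n * 1 := by
          gcongr
          exact survivorMean_one_le_one t n
      _ ≤ max 120 (B * (Real.log t + 3)) := by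
          rw [mul_one]
          exact hn.le.trans (le_max_left _ _)
  · have : 0 ≤ Real.log n := by linarith
    set X := (survivors t n).sup id
    have hone : survivorMean t n (fun _ ↦ 1) = largePrimeMass t n 0 X / totalMass n := by
      rw [survivorMean, largePrimeMass, filter_true_of_mem fun a ha ↦
        ⟨le_sup (f := id) ha, Nat.zero_le _⟩]
    have hthree : survivorMean t n (fun _ ↦ 1) ≤
        B * survivorMean t n (fun a ↦ if 3 ≤ largePrimeCount n a then 1 else 0) := by
      have hmass := div_le_div_of_nonneg_right (hshift t n X (by norm_num; linarith))
        (totalMass_pos n).le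
      rw [← hone, mul_div_assoc, ← survivorMean_ite] at hmass
      refine hmass.trans (mul_le_mul_of_nonneg_left (survivorMean_mono fun a _ ↦ ?_) hB.le)
      split_ifs with h h'
      exacts [le_rfl, absurd h.2 h', zero_le_one, le_rfl]
    calc Real.log n * survivorMean t n (fun _ ↦ 1)
        ≤ B * (Real.log n *
            survivorMean t n (fun a ↦ if 3 ≤ largePrimeCount n a then 1 else 0)) := by
          rw [mul_left_comm]
          gcongr
      _ ≤ B * (Real.log t + 3) := by
          gcongr
          exact log_mul_survivorMean_le ht n
      _ ≤ max 120 (B * (Real.log t + 3)) := le_max_right _ _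

lemma logDev_add_le_ite_add_sq {J : ℕ} {D : ℝ} (ha : 0 < a) (hJ : 0 < J) (hD : 0 ≤ D)
    (hDn : D ≤ Real.log n) (hn : 2 ≤ Real.log n) :
    logDev n a + D ≤ (J + 2 + D) * Real.log n * (if a ≤ n ^ (J + 2) then 1 else 0) +
      2 / (J * Real.log n) * logDev n a ^ 2 := by
  have ha0 : (0 : ℝ) < a := mod_cast ha
  have hJ1 : (1 : ℝ) ≤ J := mod_cast hJ
  have hlog_pow : Real.log ((n : ℝ) ^ (J + 2)) = (J + 2) * Real.log n := by
    rw [Real.log_pow]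
    push_cast
    ring
  have hmean := logMean_le_log_add_two n
  split_ifs with hle
  · have hlog : Real.log a ≤ (J + 2) * Real.log n :=
      hlog_pow ▸ Real.log_le_log ha0 (mod_cast hle)
    have hDl : D ≤ D * Real.log n := le_mul_of_one_le_right hD (by linarith)
    have hsq : 0 ≤ 2 / (J * Real.log n) * logDev n a ^ 2 := by positivity
    have hdev : logDev n a ≤ Real.log a := sub_le_self _ (logMean_nonneg n)
    linarith
  · have hn0 : (0 : ℝ) < n := by
      refine Nat.cast_pos.2 (Nat.pos_of_ne_zero ?_)
      rintro rfl
      norm_num at hn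
    have hlog : (J + 2) * Real.log n ≤ Real.log a :=
      hlog_pow ▸ Real.log_le_log (by positivity) (mod_cast (not_le.1 hle).le)
    have hdev : J * Real.log n ≤ logDev n a := by
      unfold logDev
      linarith
    have hDdev : D ≤ logDev n a :=
      hDn.trans ((le_mul_of_one_le_left (by linarith) hJ1).trans hdev)
    have htwo : 2 * logDev n a ≤ 2 / (J * Real.log n) * logDev n a ^ 2 := by
      rw [div_mul_eq_mul_div, le_div_iff₀ (by positivity), sq]
      nlinarith
    linarith

lemma exists_le_largePrimeMass_zero (ht : 7 ≤ Real.log t) :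
    ∃ K : ℕ, ∃ c : ℝ, 0 < c ∧ ∀ᶠ n : ℕ in atTop, c ≤ largePrimeMass t n 0 (n ^ K) := by
  have ht0 : 0 < t := Nat.pos_of_ne_zero (by rintro rfl; norm_num at ht)
  obtain ⟨C, hC, hprob⟩ := exists_log_mul_survivorMean_one_le ht0
  obtain ⟨J, hJ⟩ := exists_nat_ge (8 * C + 1)
  set D := Real.log t - 6
  have hD : 1 ≤ D := by linarith
  have hJ0 : (0 : ℝ) < J := by linarith
  refine ⟨J + 2, D / (4 * (J + 2 + D)), by positivity, ?_⟩
  filter_upwards [(Real.tendsto_log_atTop.comp tendsto_natCast_atTop_atTop).eventually_ge_atTop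
    (2 + D)] with n hn
  replace hn : 2 + D ≤ Real.log n := hn
  set l := Real.log n
  have hl : 0 < l := by linarith
  set q := survivorMean t n (fun a ↦ if a ≤ n ^ (J + 2) then 1 else 0)
  have hdev : D ≤ (J + 2 + D) * l * q +
      2 / (J * l) * survivorMean t n (fun a ↦ logDev n a ^ 2) := by
    rw [← survivorMean_const_mul, ← survivorMean_const_mul, ← survivorMean_add]
    exact (log_sub_six_le_survivorMean ht0 n).trans (survivorMean_mono fun a ha ↦
      logDev_add_le_ite_add_sq (pos_of_mem_survivors ha) (mod_cast hJ0) (by linarith)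
        (by linarith) (by linarith))
  have hvar : 2 / (J * l) * survivorMean t n (fun a ↦ logDev n a ^ 2) ≤ D / 2 := by
    calc 2 / (J * l) * survivorMean t n (fun a ↦ logDev n a ^ 2)
        ≤ 2 / (J * l) * (C * (2 * l)) := by
          gcongr
          refine (survivorMean_logDev_sq_le hprob n).trans ?_
          gcongr
          linarith [logMean_le_log_add_two n]
      _ = 4 * C / J := by
          field_simp
          ring
      _ ≤ D / 2 := by
          rw [div_le_div_iff₀ hJ0 two_pos]
          nlinarith
  have hmass : l / 2 * q ≤ largePrimeMass t n 0 (n ^ (J + 2)) := by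
    rw [largePrimeMass_zero_eq]
    gcongr
    · exact div_nonneg (sum_nonneg fun a _ ↦ by positivity) (totalMass_pos n).le
    · exact log_div_two_le_totalMass n
  have hJD := mul_le_mul_of_nonneg_left hmass (by positivity : 0 ≤ 4 * (J + 2 + D))
  rw [div_le_iff₀ (by positivity)]
  linarith

end SurvivalProbability

-- Inserting `2 * K + 4` large primes into a survivor `a ≤ n ^ K` gives one that is at most
-- `n ^ (3 * K + 4)` and whose square exceeds `n ^ (3 * (K + 2))`.
lemma exists_le_sum_survivors {t : ℕ} (ht : 7 ≤ Real.log t) :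
    ∃ h : ℕ, 0 < h ∧ ∃ c : ℝ, 0 < c ∧ ∀ᶠ n : ℕ in atTop,
      c ≤ ∑ a ∈ survivors t n with a * n ≤ n ^ h ∧ n ^ (h + 1) ≤ a ^ 2, 1 / (a : ℝ) := by
  obtain ⟨K, c, hc, hmass⟩ := exists_le_largePrimeMass_zero ht
  obtain ⟨B, hB, hshift⟩ := exists_largePrimeMass_zero_le (2 * K + 4)
  refine ⟨3 * K + 5, by positivity, c / B, by positivity, ?_⟩
  filter_upwards [hmass, eventually_gt_atTop 0,
    (Real.tendsto_log_atTop.comp tendsto_natCast_atTop_atTop).eventually_ge_atTop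
      (8 * (9 + 2 * (2 * K + 4 : ℕ)) : ℝ)] with n hcn hn hlog
  rw [div_le_iff₀' hB]
  refine (hcn.trans (hshift t n _ hlog)).trans ?_
  unfold largePrimeMass
  refine mul_le_mul_of_nonneg_left (sum_le_sum_of_subset_of_nonneg
    (monotone_filter_right _ fun a ha haX ↦ ?_) fun _ _ _ ↦ by positivity) hB.le
  obtain ⟨haX, hk⟩ := haX
  refine ⟨?_, (Nat.pow_le_pow_iff_left two_ne_zero).1 ?_⟩
  · calc a * n ≤ n ^ K * n ^ (2 * K + 4) * n := Nat.mul_le_mul_right n haX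
      _ = n ^ (3 * K + 5) := by ring
  · calc (n ^ (3 * K + 5 + 1)) ^ 2 = n ^ (3 * (2 * K + 4)) := by ring
      _ ≤ a ^ 4 := pow_three_mul_le_pow_four (pos_of_mem_survivors ha) hn hk
      _ = (a ^ 2) ^ 2 := by ring

/-- The primes in the real interval `(x, y]`; the encoding is correct for `0 ≤ x`. -/
noncomputable def primesIoc (x y : ℝ) : Finset ℕ := {p ∈ Ioc ⌊x⌋₊ ⌊y⌋₊ | p.Prime}

section PrimesIoc

variable {x y R : ℝ}

lemma prime_of_mem_primesIoc {p : ℕ} (hp : p ∈ primesIoc x y) : p.Prime := (mem_filter.1 hp).2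

lemma lt_of_mem_primesIoc {p : ℕ} (hp : p ∈ primesIoc x y) : x < p :=
  Nat.lt_of_floor_lt (mem_Ioc.1 (mem_filter.1 hp).1).1

lemma le_of_mem_primesIoc {p : ℕ} (hp : p ∈ primesIoc x y) : (p : ℝ) ≤ y :=
  (Nat.le_floor_iff' (prime_of_mem_primesIoc hp).ne_zero).1 (mem_Ioc.1 (mem_filter.1 hp).1).2

lemma logMean_floor_add_one (hxy : x ≤ y) : logMean (⌊y⌋₊ + 1) =
    logMean (⌊x⌋₊ + 1) + ∑ p ∈ primesIoc x y, Real.log p / (p + 1) := by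
  have hfloor := Nat.floor_le_floor hxy
  have hdisj : Disjoint (⌊x⌋₊ + 1).primesBelow (primesIoc x y) := by
    refine disjoint_left.2 fun p hp hp' ↦ ?_
    have := (Nat.mem_primesBelow.1 hp).1
    have := (mem_Ioc.1 (mem_filter.1 hp').1).1
    omega
  rw [logMean, logMean, ← sum_union hdisj]
  congr 1
  ext p
  simp only [mem_union, primesIoc, mem_filter, mem_Ioc, Nat.mem_primesBelow]
  grind

-- Comparing `logMean` at the two ends gives `1 ≤ ∑ log p / (p + 1)`, and each term is at most
-- `log (R * r) / r`.
lemma le_log_mul_card_primesIoc {r : ℝ} (hR : 10 ≤ Real.log R) (hR1 : 1 ≤ R) (hr : 1 ≤ r) :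
    r ≤ Real.log (R * r) * #(primesIoc r (R * r)) := by
  have hR0 : 0 < R := by linarith
  have hr0 : 0 < r := by linarith
  have hlower : Real.log (⌊r⌋₊ + 1 : ℕ) ≤ Real.log 2 + Real.log r := by
    rw [← Real.log_mul two_ne_zero hr0.ne']
    refine Real.log_le_log (by positivity) ?_
    push_cast
    linarith [Nat.floor_le hr0.le]
  have hupper : Real.log R + Real.log r ≤ Real.log (⌊R * r⌋₊ + 1 : ℕ) := by
    rw [← Real.log_mul hR0.ne' hr0.ne']
    refine Real.log_le_log (by positivity) ?_
    push_cast
    exact (Nat.lt_floor_add_one _).le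
  have hsum : 1 ≤ ∑ p ∈ primesIoc r (R * r), Real.log p / (p + 1) := by
    linarith [logMean_floor_add_one (le_mul_of_one_le_left hr0.le hR1),
      log_le_logMean_add_six (⌊R * r⌋₊ + 1), logMean_le_log_add_two (⌊r⌋₊ + 1),
      Real.log_two_lt_d9]
  have hcard : ∑ p ∈ primesIoc r (R * r), Real.log p / (p + 1) ≤
      #(primesIoc r (R * r)) • (Real.log (R * r) / r) := by
    refine sum_le_card_nsmul _ _ _ fun p hp ↦ ?_
    have hrp := lt_of_mem_primesIoc hp
    have hlog : Real.log p ≤ Real.log (R * r) :=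
      Real.log_le_log (hr0.trans hrp) (le_of_mem_primesIoc hp)
    gcongr
    · exact (Real.log_natCast_nonneg p).trans hlog
    · linarith
  have := hsum.trans hcard
  rw [nsmul_eq_mul, mul_div_assoc', le_div_iff₀ hr0] at this
  linarith

end PrimesIoc

/-- The integers in `(z, R z]` whose largest prime factor is at most their square root and whose
Schinzel–Szekeres function exceeds them by a factor of at most `t`. -/
def balancedIntegers (t : ℕ) (R z : ℝ) : Set ℕ :=
  {b | z < b ∧ b ≤ R * z ∧ Pmax b ^ 2 ≤ b ∧ SS b ≤ t * b}

section BalancedIntegers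

variable {t n a p : ℕ} {R z : ℝ} {A : Finset ℕ}

lemma finite_balancedIntegers (t : ℕ) (R z : ℝ) : (balancedIntegers t R z).Finite :=
  (Set.finite_Iic ⌊R * z⌋₊).subset fun _ hb ↦ Nat.le_floor hb.2.1

lemma le_div_of_mem_survivors (ha : a ∈ survivors t n) (hz : a * n ≤ z) : n ≤ z / a := by
  rwa [le_div_iff₀' (Nat.cast_pos.2 (pos_of_mem_survivors ha))]

lemma mul_mem_balancedIntegers (ht : 0 < t) (ha : a ∈ survivors t n) (hz : a * n ≤ z)
    (hRz : R * z ≤ a ^ 2) (hp : p ∈ primesIoc (z / a) (R * (z / a))) :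
    a * p ∈ balancedIntegers t R z := by
  have hapos := pos_of_mem_survivors ha
  have ha0 : (0 : ℝ) < a := mod_cast hapos
  have hpp := prime_of_mem_primesIoc hp
  have hlt := lt_of_mem_primesIoc hp
  have hle := le_of_mem_primesIoc hp
  rw [div_lt_iff₀' ha0] at hlt
  rw [mul_div_assoc', le_div_iff₀' ha0] at hle
  have hnp : n < p := by
    exact_mod_cast (le_div_of_mem_survivors ha hz).trans_lt (lt_of_mem_primesIoc hp)
  have hpa : p ≤ a := by
    have : (a * p : ℝ) ≤ a * a := by rw [← sq]; exact hle.trans hRz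
    exact_mod_cast le_of_mul_le_mul_left this ha0
  have hsmooth : a ∈ (p + 1).smoothNumbers :=
    Nat.smoothNumbers_mono (hnp.le.trans p.le_succ) (mem_smoothNumbers_of_mem_survivors ha)
  refine ⟨mod_cast hlt, mod_cast hle, ?_, ?_⟩
  · rw [Pmax_mul_prime hpp hsmooth, sq]
    exact Nat.mul_le_mul_right p hpa
  · exact SS_mul_prime_le hpp hsmooth (SS_le_of_mem_survivors ht ha)
      (hpa.trans (Nat.le_mul_of_pos_left a ht))

lemma eq_of_mul_eq_mul_of_mem_survivors {b r : ℕ} (hb : b ∈ survivors t n) (hp : p.Prime)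
    (hr : r.Prime) (hnp : n ≤ p) (h : a * p = b * r) : a = b ∧ p = r := by
  obtain rfl : p = r := by
    rcases hp.dvd_mul.1 (h ▸ dvd_mul_left p a) with hdvd | hdvd
    · have := Nat.mem_smoothNumbers'.1 (mem_smoothNumbers_of_mem_survivors hb) p hp hdvd
      omega
    · exact (Nat.prime_dvd_prime_iff_eq hp hr).1 hdvd
  exact ⟨Nat.eq_of_mul_eq_mul_right hp.pos h, rfl⟩

lemma card_sigma_primesIoc_le_ncard_balancedIntegers (ht : 0 < t) (hA : A ⊆ survivors t n)
    (hz : ∀ a ∈ A, a * n ≤ z) (hRz : ∀ a ∈ A, R * z ≤ a ^ 2) :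
    #(A.sigma fun a ↦ primesIoc (z / a) (R * (z / a))) ≤ (balancedIntegers t R z).ncard := by
  rw [← Set.ncard_coe_finset]
  refine Set.ncard_le_ncard_of_injOn (fun x ↦ x.1 * x.2) (fun x hx ↦ ?_) ?_
    (finite_balancedIntegers t R z)
  · obtain ⟨ha, hp⟩ := mem_sigma.1 (mem_coe.1 hx)
    exact mul_mem_balancedIntegers ht (hA ha) (hz _ ha) (hRz _ ha) hp
  · rintro ⟨a, p⟩ hx ⟨b, r⟩ hy hmul
    obtain ⟨ha, hp⟩ := mem_sigma.1 (mem_coe.1 hx)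
    obtain ⟨hb, hr⟩ := mem_sigma.1 (mem_coe.1 hy)
    have hnp : (n : ℝ) ≤ p :=
      (le_div_of_mem_survivors (hA ha) (hz a ha)).trans (lt_of_mem_primesIoc hp).le
    obtain ⟨rfl, rfl⟩ := eq_of_mul_eq_mul_of_mem_survivors (hA hb) (prime_of_mem_primesIoc hp)
      (prime_of_mem_primesIoc hr) (mod_cast hnp) hmul
    rfl

lemma mul_sum_one_div_le_log_mul_ncard_balancedIntegers (ht : 0 < t) (hR : 10 ≤ Real.log R)
    (hR1 : 1 ≤ R) (hz1 : 1 ≤ z) (hn : 0 < n) (hA : A ⊆ survivors t n)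
    (hz : ∀ a ∈ A, a * n ≤ z) (hRz : ∀ a ∈ A, R * z ≤ a ^ 2) :
    z * ∑ a ∈ A, 1 / (a : ℝ) ≤ Real.log (R * z) * (balancedIntegers t R z).ncard := by
  have hlog : 0 ≤ Real.log (R * z) := Real.log_nonneg (one_le_mul_of_one_le_of_one_le hR1 hz1)
  calc z * ∑ a ∈ A, 1 / (a : ℝ)
      ≤ ∑ a ∈ A, Real.log (R * z) * #(primesIoc (z / a) (R * (z / a))) := by
        rw [mul_sum]
        refine sum_le_sum fun a ha ↦ ?_
        have ha1 : (1 : ℝ) ≤ a := mod_cast pos_of_mem_survivors (hA ha)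
        have hza : 1 ≤ z / a :=
          (Nat.one_le_cast.2 hn).trans (le_div_of_mem_survivors (hA ha) (hz a ha))
        rw [mul_one_div]
        refine (le_log_mul_card_primesIoc hR hR1 hza).trans ?_
        gcongr
        exact div_le_self (by linarith) ha1
    _ = Real.log (R * z) * #(A.sigma fun a ↦ primesIoc (z / a) (R * (z / a))) := by
        rw [← mul_sum, card_sigma, Nat.cast_sum]
    _ ≤ Real.log (R * z) * (balancedIntegers t R z).ncard := by
        gcongr
        exact card_sigma_primesIoc_le_ncard_balancedIntegers ht hA hz hRz

end BalancedIntegers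

-- Every survivor in the sum of `exists_le_sum_survivors`, taken for `n = ⌊z ^ (1 / h)⌋`, satisfies
-- `a * n ≤ z` and `R * z ≤ a ^ 2`.
theorem exists_mul_le_log_mul_ncard_balancedIntegers {t : ℕ} {R : ℝ} (ht : 7 ≤ Real.log t)
    (hR : 10 ≤ Real.log R) (hR1 : 1 ≤ R) : ∃ c : ℝ, 0 < c ∧ ∀ᶠ z : ℝ in atTop,
      c * z ≤ Real.log (R * z) * (balancedIntegers t R z).ncard := by
  have ht0 : 0 < t := Nat.pos_of_ne_zero (by rintro rfl; norm_num at ht)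
  obtain ⟨h, hh, c, hc, hsum⟩ := exists_le_sum_survivors ht
  refine ⟨c, hc, ?_⟩
  have hroot : Tendsto (fun z : ℝ ↦ ⌊z ^ (h : ℝ)⁻¹⌋₊) atTop atTop :=
    tendsto_nat_floor_atTop.comp (tendsto_rpow_atTop (by positivity))
  filter_upwards [hroot.eventually hsum, hroot.eventually_ge_atTop ⌈R * 2 ^ h⌉₊,
    eventually_ge_atTop 1] with z hcz hRn hz1
  have hz0 : 0 ≤ z := by linarith
  set n := ⌊z ^ (h : ℝ)⁻¹⌋₊
  replace hRn : R * 2 ^ h ≤ n := Nat.ceil_le.1 hRn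
  have hn1 : (1 : ℝ) ≤ n :=
    (one_le_mul_of_one_le_of_one_le hR1 (one_le_pow₀ one_le_two)).trans hRn
  have hzh : (z ^ (h : ℝ)⁻¹) ^ h = z := Real.rpow_inv_natCast_pow hz0 hh.ne'
  have hnz : (n : ℝ) ^ h ≤ z := by
    calc (n : ℝ) ^ h ≤ (z ^ (h : ℝ)⁻¹) ^ h := by
          gcongr
          exact Nat.floor_le (by positivity)
      _ = z := hzh
  have hRz : R * z ≤ (n : ℝ) ^ (h + 1) := by
    calc R * z = R * (z ^ (h : ℝ)⁻¹) ^ h := by rw [hzh]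
      _ ≤ R * (2 * n) ^ h := by
          gcongr
          linarith [Nat.lt_floor_add_one (z ^ (h : ℝ)⁻¹)]
      _ = R * 2 ^ h * n ^ h := by ring
      _ ≤ n * n ^ h := by gcongr
      _ = (n : ℝ) ^ (h + 1) := by ring
  set A := {a ∈ survivors t n | a * n ≤ n ^ h ∧ n ^ (h + 1) ≤ a ^ 2}
  have hA (a : ℕ) (ha : a ∈ A) : (a * n : ℝ) ≤ z ∧ R * z ≤ (a : ℝ) ^ 2 := by
    obtain ⟨-, han, hna⟩ := mem_filter.1 ha
    exact ⟨le_trans (mod_cast han) hnz, hRz.trans (mod_cast hna)⟩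
  calc c * z ≤ z * ∑ a ∈ A, 1 / (a : ℝ) := by
        rw [mul_comm]
        gcongr
    _ ≤ Real.log (R * z) * (balancedIntegers t R z).ncard :=
        mul_sum_one_div_le_log_mul_ncard_balancedIntegers ht0 hR hR1 hz1 (mod_cast hn1)
          (filter_subset _ _) (fun a ha ↦ (hA a ha).1) fun a ha ↦ (hA a ha).2

section Window

variable {t γ : ℕ} {R x q α β : ℝ}

lemma mul_div_le_sqrt_div (hx : 0 ≤ x) (hq : 0 < q) (hRq : R ^ 2 ≤ q) :
    R * (√x / q) ≤ √(x / q) := by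
  refine Real.le_sqrt_of_sq_le ?_
  rw [mul_pow, div_pow, Real.sq_sqrt hx, mul_div_assoc', div_le_div_iff₀ (by positivity) hq]
  calc R ^ 2 * x * q ≤ q * x * q := by gcongr
    _ = x * q ^ 2 := by ring

lemma balancedIntegers_subset (hx : 0 ≤ x) (hq : 0 < q) (hRq : R ^ 2 ≤ q)
    (hRx : R * √x ≤ q ^ 3) (ht : t * R ≤ 2 ^ γ) :
    balancedIntegers t R (√x / q) ⊆
      {a : ℕ | 1 ≤ a ∧ √x / q < (a : ℝ) ∧ (a : ℝ) ≤ √(x / q) ∧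
        (Pmax a : ℝ) ≤ q ∧ (SS a : ℝ) ≤ 2 ^ γ * √x / q} := by
  rintro b ⟨hzb, hbR, hPmax, hSS⟩
  have hb0 : (0 : ℝ) < b := (by positivity : (0 : ℝ) ≤ √x / q).trans_lt hzb
  refine ⟨mod_cast hb0, hzb, hbR.trans (mul_div_le_sqrt_div hx hq hRq), ?_, ?_⟩
  · refine le_of_sq_le_sq ?_ hq.le
    calc (Pmax b : ℝ) ^ 2 ≤ b := mod_cast hPmax
      _ ≤ R * (√x / q) := hbR
      _ ≤ q ^ 2 := by
          rw [mul_div_assoc', div_le_iff₀ hq]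
          linarith
  · calc (SS b : ℝ) ≤ t * b := mod_cast hSS
      _ ≤ t * (R * (√x / q)) := by gcongr
      _ = t * R * √x / q := by ring
      _ ≤ 2 ^ γ * √x / q := by gcongr

lemma mul_sqrt_le_pow_three (hx : 0 < x) (hRx : R ≤ x ^ (3 * α - 1 / 2)) (hq : x ^ α ≤ q) :
    R * √x ≤ q ^ 3 := by
  calc R * √x ≤ x ^ (3 * α - 1 / 2) * x ^ (1 / 2 : ℝ) := by
        rw [Real.sqrt_eq_rpow]
        gcongr
    _ = (x ^ α) ^ 3 := by
        rw [← Real.rpow_add hx, ← Real.rpow_mul_natCast hx.le]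
        ring_nf
    _ ≤ q ^ 3 := by gcongr

lemma rpow_half_sub_le_sqrt_div (hx : 0 < x) (hq : 0 < q) (hqx : q ≤ x ^ β) :
    x ^ (1 / 2 - β) ≤ √x / q := by
  rw [Real.rpow_sub hx, Real.sqrt_eq_rpow]
  gcongr

lemma mul_div_le_self (hx : 1 ≤ x) (hq : 1 ≤ q) (hRq : R ^ 2 ≤ q) : R * (√x / q) ≤ x := by
  refine (mul_div_le_sqrt_div (by linarith) (by linarith) hRq).trans ?_
  rw [Real.sqrt_le_left (by linarith)]
  calc x / q ≤ x := div_le_self (by linarith) hq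
    _ ≤ x ^ 2 := le_self_pow₀ hx two_ne_zero

lemma sqrt_div_le_ncard {c : ℝ} (hx : 1 < x) (hq : 1 ≤ q) (hR : 0 < R) (hRq : R ^ 2 ≤ q)
    (hRx : R * √x ≤ q ^ 3) (ht : t * R ≤ 2 ^ γ) (hc : c⁻¹ ≤ 2 ^ γ) (hc0 : 0 < c)
    (hcard : c * (√x / q) ≤ Real.log (R * (√x / q)) * (balancedIntegers t R (√x / q)).ncard) :
    √x / (2 ^ γ * q * Real.log x) ≤
      ({a : ℕ | 1 ≤ a ∧ √x / q < (a : ℝ) ∧ (a : ℝ) ≤ √(x / q) ∧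
        (Pmax a : ℝ) ≤ q ∧ (SS a : ℝ) ≤ 2 ^ γ * √x / q}.ncard : ℝ) := by
  have hx0 : 0 < x := by linarith
  have hq0 : 0 < q := by linarith
  have hlog : 0 < Real.log x := Real.log_pos hx
  set T := {a : ℕ | 1 ≤ a ∧ √x / q < (a : ℝ) ∧ (a : ℝ) ≤ √(x / q) ∧
    (Pmax a : ℝ) ≤ q ∧ (SS a : ℝ) ≤ 2 ^ γ * √x / q}
  have hT : T.Finite := (Set.finite_Iic ⌊√(x / q)⌋₊).subset fun a ha ↦ Nat.le_floor ha.2.2.1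
  calc √x / (2 ^ γ * q * Real.log x) = (2 ^ γ)⁻¹ * (√x / q) / Real.log x := by field_simp
    _ ≤ c * (√x / q) / Real.log x := by
        gcongr
        exact inv_le_of_inv_le₀ hc0 hc
    _ ≤ (balancedIntegers t R (√x / q)).ncard := by
        rw [div_le_iff₀' hlog]
        refine hcard.trans ?_
        gcongr
        exact mul_div_le_self hx.le hq hRq
    _ ≤ T.ncard := mod_cast Set.ncard_le_ncard
        (balancedIntegers_subset hx0.le hq0 hRq hRx ht) hT

end Window

theorem stmt_8_general : ∃ γ : ℕ, 0 < γ ∧ ∀ α β : ℝ, 1 / 6 < α → β < 1 / 2 →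
    ∃ x₀ : ℝ, 0 < x₀ ∧ ∀ x q : ℝ, x₀ ≤ x → x ^ α < q → q ≤ x ^ β →
      √x / (2 ^ γ * q * Real.log x) ≤
        ({a : ℕ | 1 ≤ a ∧ √x / q < (a : ℝ) ∧ (a : ℝ) ≤ √(x / q) ∧
          (Pmax a : ℝ) ≤ q ∧ (SS a : ℝ) ≤ 2 ^ γ * √x / q}.ncard : ℝ) := by
  obtain ⟨t, hlog, ht⟩ := (((Real.tendsto_log_atTop.comp
    tendsto_natCast_atTop_atTop).eventually_ge_atTop 10).and (eventually_ge_atTop 1)).exists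
  replace hlog : 10 ≤ Real.log t := hlog
  have ht1 : (1 : ℝ) ≤ t := mod_cast ht
  obtain ⟨c, hc, hcard⟩ :=
    exists_mul_le_log_mul_ncard_balancedIntegers (by linarith : 7 ≤ Real.log t) hlog ht1
  obtain ⟨γ, hγ, hγ0⟩ := (((tendsto_pow_atTop_atTop_of_one_lt
    (one_lt_two (α := ℝ))).eventually_ge_atTop (max (t * t) c⁻¹)).and
    (eventually_gt_atTop 0)).exists
  obtain ⟨htγ, hcγ⟩ := max_le_iff.1 hγ
  refine ⟨γ, hγ0, fun α β hα hβ ↦ ?_⟩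
  have hx₀ : ∀ᶠ x : ℝ in atTop, 1 < x ∧ (t : ℝ) ^ 2 ≤ x ^ α ∧ (t : ℝ) ≤ x ^ (3 * α - 1 / 2) ∧
      ∀ z, x ^ (1 / 2 - β) ≤ z → c * z ≤ Real.log (t * z) * (balancedIntegers t t z).ncard :=
    (eventually_gt_atTop 1).and <|
      ((tendsto_rpow_atTop (by linarith)).eventually_ge_atTop _).and <|
      ((tendsto_rpow_atTop (by linarith)).eventually_ge_atTop _).and <|
      (tendsto_rpow_atTop (by linarith)).eventually (eventually_forall_ge_atTop.2 hcard)
  obtain ⟨x₀, hx₀⟩ := eventually_atTop.1 hx₀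
  refine ⟨max x₀ 1, by positivity, fun x q hx hαq hqβ ↦ ?_⟩
  obtain ⟨hx1, htα, htx, hz⟩ := hx₀ x ((le_max_left _ _).trans hx)
  have hx0 : 0 < x := by linarith
  have htq : (t : ℝ) ^ 2 ≤ q := htα.trans hαq.le
  have hq1 : 1 ≤ q := (one_le_pow₀ ht1).trans htq
  have hq0 : 0 < q := by linarith
  exact sqrt_div_le_ncard hx1 hq1 (by linarith) htq (mul_sqrt_le_pow_three hx0 htx hαq.le) htγ hcγ
    hc (hz _ (rpow_half_sub_le_sqrt_div hx0 hq0 hqβ))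

end

/-- There exist a positive integer `γ` and a positive real `x₀` such that for all
reals `x ≥ x₀` and `x^{1/5} < q ≤ x^{1/4}`, the number of positive integers `a` with
`√x/q < a ≤ √(x/q)`, `P(a) ≤ q` and `S(a) ≤ 2^γ √x/q` is at least `√x/(2^γ q log x)`. -/
theorem stmt_8 : ∃ γ : ℕ, 0 < γ ∧ ∃ x₀ : ℝ, 0 < x₀ ∧ ∀ x q : ℝ, x₀ ≤ x →
    x ^ ((1 : ℝ) / 5) < q → q ≤ x ^ ((1 : ℝ) / 4) →
    Real.sqrt x / (2 ^ γ * q * Real.log x) ≤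
      ({a : ℕ | 1 ≤ a ∧ Real.sqrt x / q < (a : ℝ) ∧ (a : ℝ) ≤ Real.sqrt (x / q) ∧
        (Pmax a : ℝ) ≤ q ∧ (SS a : ℝ) ≤ 2 ^ γ * Real.sqrt x / q}.ncard : ℝ) := by
  obtain ⟨γ, hγ, h⟩ := stmt_8_general
  exact ⟨γ, hγ, h (1 / 5) (1 / 4) (by norm_num) (by norm_num)⟩
end

section
/- Let E be a nonempty finite set partitioned into classes E₁, …, E_k, and let n = |E|. Then the following are equivalent: (i) the elements of E can be ordered as e₁, e₂, …, e_n such that no two consecutive elements e_i, e_{i+1} (1 ≤ i < n) belong to the same class E_j; (ii) max_{1 ≤ j ≤ k} |E_j| ≤ (n+1)/2. -/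
/-!
A class with more than `(n + 1) / 2` elements cannot be spread out, because two neighbours in a
valid ordering contain at most one of its elements. Conversely, a greedy choice works: place next an
element of a most frequent class among those different from the class just used. Two distinct
classes together have at most as many elements as remain, so every class other than the chosen one
holds at most half of them, and the chosen class loses an element; the bounds are thus restored.

Only the multiset of classes matters, so the argument is about words with prescribed letters.
-/

section Letters

variable {ι : Type*} [DecidableEq ι]

theorem two_mul_count_le_length_add_one_of_isChain_ne (i : ι) :
    ∀ {l : List ι}, l.IsChain (· ≠ ·) → 2 * l.count i ≤ l.length + 1
  | [], _ => by simp
  | [a], _ => by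
    have : [a].count i ≤ 1 := List.count_le_length
    simpa using this
  | a :: b :: l, h => by
    have hab : a ≠ b := (List.isChain_cons_cons.mp h).1
    have ih := two_mul_count_le_length_add_one_of_isChain_ne i h.tail.tail
    have hpair : [a, b].count i ≤ 1 := by
      grind
    have hsplit : (a :: b :: l).count i = [a, b].count i + l.count i :=
      List.count_append (l₁ := [a, b])
    simp only [List.tail_cons, List.length_cons] at ih ⊢
    omega

theorem count_add_count_le_card_of_ne (s : Multiset ι) {i j : ι} (hij : i ≠ j) :
    s.count i + s.count j ≤ s.card := by
  induction s using Multiset.induction with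
  | empty => simp
  | cons a s ih =>
    simp only [Multiset.count_cons, Multiset.card_cons]
    grind

theorem two_mul_count_le_card_of_count_le {s : Multiset ι} {i j : ι} (hij : i ≠ j)
    (h : s.count i ≤ s.count j) : 2 * s.count i ≤ s.card := by
  have := count_add_count_le_card_of_ne s hij
  omega

theorem exists_mem_forall_count_le {s : Multiset ι} (hs : s ≠ 0) :
    ∃ a ∈ s, ∀ i, s.count i ≤ s.count a := by
  obtain ⟨a, ha, hmax⟩ := s.toFinset.exists_max_image s.count (by simpa using hs)
  refine ⟨a, Multiset.mem_toFinset.mp ha, fun i => ?_⟩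
  by_cases hi : i ∈ s
  · exact hmax i (Multiset.mem_toFinset.mpr hi)
  · simp [Multiset.count_eq_zero_of_notMem hi]

theorem exists_mem_ne_of_two_mul_count_le_card {s : Multiset ι} {b : ι} (hs : s ≠ 0)
    (hb : 2 * s.count b ≤ s.card) : ∃ a ∈ s, a ≠ b := by
  by_contra! hall
  have hcount : s.count b = s.card := Multiset.count_eq_card.mpr fun a ha => (hall a ha).symm
  have hpos : 0 < s.card := Multiset.card_pos.mpr hs
  omega

theorem exists_mem_ne_forall_ne_two_mul_count_le_card {s : Multiset ι} {b : ι} (hs : s ≠ 0)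
    (hb : 2 * s.count b ≤ s.card) :
    ∃ a ∈ s, a ≠ b ∧ ∀ i ≠ a, 2 * s.count i ≤ s.card := by
  obtain ⟨x, hxs, hxb⟩ := exists_mem_ne_of_two_mul_count_le_card hs hb
  have hfilter : s.filter (· ≠ b) ≠ 0 := fun h0 =>
    Multiset.notMem_zero x (h0 ▸ Multiset.mem_filter.mpr ⟨hxs, hxb⟩)
  obtain ⟨a, ha, hmax⟩ := exists_mem_forall_count_le hfilter
  obtain ⟨has, hab⟩ := Multiset.mem_filter.mp ha
  refine ⟨a, has, hab, fun i hia => ?_⟩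
  obtain rfl | hib := eq_or_ne i b
  · exact hb
  · have hle := hmax i
    rw [Multiset.count_filter_of_pos (p := (· ≠ b)) hib,
      Multiset.count_filter_of_pos (p := (· ≠ b)) hab] at hle
    exact two_mul_count_le_card_of_count_le hia hle

theorem exists_coe_cons_eq_isChain_ne {s : Multiset ι} {a : ι} (has : a ∈ s)
    (ha : 2 * s.count a ≤ s.card + 1) (hother : ∀ i ≠ a, 2 * s.count i ≤ s.card) :
    ∃ l : List ι, ((a :: l : List ι) : Multiset ι) = s ∧ (a :: l).IsChain (· ≠ ·) := by
  induction s using Multiset.strongInductionOn generalizing a with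
  | ih s ih =>
    obtain ⟨t, rfl⟩ := Multiset.exists_cons_of_mem has
    obtain rfl | ht := eq_or_ne t 0
    · exact ⟨[], rfl, List.isChain_singleton a⟩
    have hat : 2 * t.count a ≤ t.card := by
      rw [Multiset.count_cons_self, Multiset.card_cons] at ha
      omega
    obtain ⟨b, hbt, hba, hother'⟩ := exists_mem_ne_forall_ne_two_mul_count_le_card ht hat
    have hb : 2 * t.count b ≤ t.card + 1 := by
      simpa only [Multiset.count_cons_of_ne hba, Multiset.card_cons] using hother b hba
    obtain ⟨l, rfl, hl⟩ := ih t (Multiset.lt_cons_self t a) hbt hb hother'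
    exact ⟨b :: l, rfl, List.isChain_cons_cons.mpr ⟨hba.symm, hl⟩⟩

theorem exists_coe_eq_isChain_ne_iff (s : Multiset ι) :
    (∃ l : List ι, (l : Multiset ι) = s ∧ l.IsChain (· ≠ ·)) ↔
      ∀ i, 2 * s.count i ≤ s.card + 1 := by
  constructor
  · rintro ⟨l, rfl, hl⟩ i
    rw [Multiset.coe_count, Multiset.coe_card]
    exact two_mul_count_le_length_add_one_of_isChain_ne i hl
  · intro h
    obtain rfl | hs := eq_or_ne s 0
    · exact ⟨[], rfl, List.isChain_nil⟩
    obtain ⟨a, has, hmax⟩ := exists_mem_forall_count_le hs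
    obtain ⟨l, hls, hl⟩ := exists_coe_cons_eq_isChain_ne has (h a) fun i hia =>
      two_mul_count_le_card_of_count_le hia (hmax i)
    exact ⟨a :: l, hls, hl⟩

end Letters

theorem exists_coe_eq_isChain_iff_map {α ι : Type*} (s : Multiset α) (c : α → ι)
    (r : ι → ι → Prop) :
    (∃ l : List α, (l : Multiset α) = s ∧ l.IsChain (fun a b => r (c a) (c b))) ↔
      ∃ w : List ι, (w : Multiset ι) = s.map c ∧ w.IsChain r := by
  constructor
  · rintro ⟨l, rfl, hl⟩
    exact ⟨l.map c, rfl, (List.isChain_map c).mpr hl⟩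
  · rintro ⟨w, hws, hw⟩
    obtain ⟨l₀, rfl⟩ : ∃ l₀ : List α, (l₀ : Multiset α) = s := Quot.exists_rep s
    have hperm : w.Perm (l₀.map c) := Multiset.coe_eq_coe.mp hws
    obtain ⟨l, rfl, hl⟩ : ∃ l : List α, w = l.map c ∧ l.Perm l₀ :=
      (congr_fun₂ (List.eq_map_comp_perm c) w l₀).mpr hperm
    exact ⟨l, Multiset.coe_eq_coe.mpr hl, (List.isChain_map c).mp hw⟩

theorem nodup_and_toFinset_eq_iff_coe_eq_val {α : Type*} [DecidableEq α] {l : List α}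
    {E : Finset α} : l.Nodup ∧ l.toFinset = E ↔ (l : Multiset α) = E.val := by
  constructor
  · rintro ⟨hl, rfl⟩
    simp [hl.dedup]
  · intro h
    have hl : l.Nodup := Multiset.coe_nodup.mp (h ▸ E.nodup)
    exact ⟨hl, Finset.val_injective (by rw [List.toFinset_val, hl.dedup, h])⟩

theorem stmt_10_general {α ι : Type*} [DecidableEq ι] (s : Multiset α) (c : α → ι) :
    (∃ l : List α, (l : Multiset α) = s ∧ l.IsChain (fun a b => c a ≠ c b)) ↔
      ∀ i : ι, ((s.filter (fun e => c e = i)).card : ℝ) ≤ ((s.card : ℝ) + 1) / 2 := by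
  rw [exists_coe_eq_isChain_iff_map s c (· ≠ ·), exists_coe_eq_isChain_ne_iff]
  refine forall_congr' fun i => ?_
  rw [Multiset.count_map, Multiset.card_map, le_div_iff₀' two_pos]
  simp only [eq_comm (a := i)]
  norm_cast

/-- Let `E` be a nonempty finite set partitioned into classes (the fibers of `c`),
and `n = |E|`. Then the elements of `E` can be ordered as `e₁, …, e_n` with no two
consecutive elements in the same class if and only if every class has cardinality
at most `(n+1)/2`. -/
theorem stmt_10 {α ι : Type*} [DecidableEq α] [DecidableEq ι]
    (E : Finset α) (hE : E.Nonempty) (c : α → ι) :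
    (∃ l : List α, l.Nodup ∧ l.toFinset = E ∧ l.Chain' (fun a b => c a ≠ c b)) ↔
      ∀ i : ι, ((E.filter (fun e => c e = i)).card : ℝ) ≤ ((E.card : ℝ) + 1) / 2 := by
  simp only [← and_assoc, nodup_and_toFinset_eq_iff_coe_eq_val]
  exact stmt_10_general E.val c
end

section
/- Let q ∈ {2, 3}, and let x, y be real numbers with y ≥ 3 and x ≥ 3^{10}. Let A be an integer of 𝒜*(x,y) such that q < P(A) ≤ √x/27 and P⁻(A) ≥ q. Then there exists a chain A = a₁ − a₂ − ⋯ − a_s of at least two integers of 𝒜*(x,y) such that: P(a_j) = P(A) for all 1 ≤ j < s; P(a_s) = q; P⁻(a_j) ≥ q for all 1 ≤ j ≤ s; a_{s−1} > √(x·P(a_{s−1})); P(a_{s−1}/P(a_{s−1})) ≤ √(x/P(a_{s−1}))/27; and a_s > 3√x. -/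
/-- `n ∈ 𝒜*(x,y)`, i.e. `n ≥ 1`, `n > √x`, `P(n) ≤ min(y, √x/27)` and `S(n) ≤ x`. -/
def AstarMem (x y : ℝ) (n : ℕ) : Prop :=
  1 ≤ n ∧ Real.sqrt x < (n : ℝ) ∧ (Pmax n : ℝ) ≤ min y (Real.sqrt x / 27) ∧ (SS n : ℝ) ≤ x

/-!
Let `p = P(A)`. As long as `q² n ≤ x`, multiplying `n` by `q` stays in `𝒜*(x,y)`: it keeps
`P(n) = p` and `P⁻(n) ≥ q`, and `S(qn) = max (q² n) (S(n))`. So one may climb to some `N = qᵏ n`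
with `x < q² N`. Since `q² ≤ 9`, dividing `N` by a prime `r ≤ p ≤ √x/27` then leaves `N / r > 3√x`,
and `S` is monotone under divisibility, so the quotient is still in `𝒜*(x,y)`. Alternating the two
moves removes, one after another, all primes of `A` except one factor `p` and powers of `q`. One
arrives at `qᵉ p` with `x < q² qᵉ p`, and a last division by `p` gives `qᵉ > 3√x`. Extracting a path
from this walk in the divisor graph makes the terms distinct.
-/

section Pmax

variable {m n p : ℕ}

theorem pmax_eq_max_sup_primeFactors (n : ℕ) : Pmax n = max 1 (n.primeFactors.sup id) := by
  rcases Nat.lt_or_ge 1 n with hn | hn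
  · obtain ⟨r, hr⟩ := Nat.nonempty_primeFactors.2 hn
    have hle : r ≤ n.primeFactors.sup id := Finset.le_sup (f := id) hr
    rw [Pmax, if_neg hn.not_ge, max_eq_right (le_trans (Nat.pos_of_mem_primeFactors hr) hle)]
  · interval_cases n <;> simp [Pmax]

theorem pmax_prime (hp : p.Prime) : Pmax p = p := by
  simpa [pmax_eq_max_sup_primeFactors, hp.primeFactors] using hp.one_le

theorem pmax_prime_pow (hp : p.Prime) {k : ℕ} (hk : k ≠ 0) : Pmax (p ^ k) = p := by
  rw [pmax_eq_max_sup_primeFactors, Nat.primeFactors_pow p hk, ← pmax_eq_max_sup_primeFactors,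
    pmax_prime hp]

theorem pmax_mul (hm : m ≠ 0) (hn : n ≠ 0) : Pmax (m * n) = max (Pmax m) (Pmax n) := by
  simp only [pmax_eq_max_sup_primeFactors, Nat.primeFactors_mul hm hn, Finset.sup_union]
  exact sup_sup_distrib_left _ _ _

theorem pmax_le_of_dvd (hmn : m ∣ n) (hn : n ≠ 0) : Pmax m ≤ Pmax n := by
  simp only [pmax_eq_max_sup_primeFactors]
  exact max_le_max_left 1 (Finset.sup_mono (Nat.primeFactors_mono hmn hn))

theorem le_pmax_of_prime_dvd (hp : p.Prime) (hpn : p ∣ n) (hn : n ≠ 0) : p ≤ Pmax n :=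
  (pmax_prime hp).ge.trans (pmax_le_of_dvd hpn hn)

theorem one_lt_of_pmax_ne_one (hn : Pmax n ≠ 1) : 1 < n := by
  contrapose! hn
  exact if_pos hn

theorem pmax_mem_primeFactors (hn : 1 < n) : Pmax n ∈ n.primeFactors := by
  obtain ⟨r, hr, hsup⟩ :=
    Finset.exists_mem_eq_sup _ (Nat.nonempty_primeFactors.2 hn) (id : ℕ → ℕ)
  rw [Pmax, if_neg hn.not_ge, hsup]
  exact hr

end Pmax

section IsRough

variable {m n q r : ℕ}

/-- `n` is `q`-rough: `P⁻(n) ≥ q`. In this encoding `1` is `q`-rough for every `q`, whereas `0` is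
`q`-rough only for `q ≤ 2`. -/
def IsRough (q n : ℕ) : Prop := ∀ r : ℕ, r.Prime → r ∣ n → q ≤ r

theorem IsRough.of_dvd (hn : IsRough q n) (hmn : m ∣ n) : IsRough q m :=
  fun r hr hrm ↦ hn r hr (hrm.trans hmn)

theorem IsRough.prime_mul (hn : IsRough q n) (hr : r.Prime) (hqr : q ≤ r) :
    IsRough q (r * n) := by
  intro t ht htrn
  rcases ht.dvd_mul.1 htrn with htr | htn
  · exact hqr.trans ((Nat.prime_dvd_prime_iff_eq ht hr).1 htr).ge
  · exact hn t ht htn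

theorem IsRough.le_minFac (hn : IsRough q n) (hn1 : n ≠ 1) : q ≤ n.minFac :=
  hn _ (Nat.minFac_prime hn1) (Nat.minFac_dvd n)

theorem IsRough.minFac_prime_mul (hn : IsRough r n) (hr : r.Prime) : (r * n).minFac = r :=
  le_antisymm (Nat.minFac_le_of_dvd hr.two_le (dvd_mul_right r n))
    ((hn.prime_mul hr le_rfl).le_minFac fun h ↦ hr.ne_one (Nat.eq_one_of_mul_eq_one_right h))

end IsRough

section SchinzelSzekeres

variable {m n q r : ℕ}

/-- The Schinzel–Szekeres function of an integer, computed from the increasing list of its prime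
factors. The recursion on the list makes induction on sublists available. -/
def listSS : List ℕ → ℕ
  | [] => 1
  | a :: l => max (a * (a :: l).prod) (listSS l)

theorem ss_eq_listSS (n : ℕ) : SS n = listSS n.primeFactorsList := by
  rw [SS]
  generalize n.primeFactorsList = l
  induction l with
  | nil => rfl
  | cons a l ih =>
    simp only [listSS, ← ih, List.length_cons, List.range_succ_eq_map, List.map_cons,
      List.foldr_cons, List.map_map, Function.comp_def, Nat.succ_eq_add_one, List.drop_succ_cons,
      List.drop_zero, List.headI_cons]

theorem listSS_le_of_sublist {l₁ l₂ : List ℕ} (h : l₁.Sublist l₂) (hpos : ∀ a ∈ l₂, 1 ≤ a) :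
    listSS l₁ ≤ listSS l₂ := by
  induction h with
  | slnil => exact le_rfl
  | cons a _ ih => exact (ih fun b hb ↦ hpos b (.tail a hb)).trans (le_max_right _ _)
  | cons_cons a hsub ih =>
    have hprod := (hsub.cons_cons a).prod_le_prod' hpos
    exact max_le_max (Nat.mul_le_mul_left a hprod) (ih fun b hb ↦ hpos b (.tail a hb))

theorem ss_le_of_dvd (hmn : m ∣ n) (hn : n ≠ 0) : SS m ≤ SS n := by
  simp only [ss_eq_listSS]
  exact listSS_le_of_sublist (Nat.primeFactorsList_sublist_of_dvd hmn hn)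
    fun _ hr ↦ (Nat.prime_of_mem_primeFactorsList hr).one_le

theorem ss_eq_max_minFac_mul (hn : 1 < n) :
    SS n = max (n.minFac * n) (SS (n / n.minFac)) := by
  obtain ⟨k, rfl⟩ := Nat.exists_eq_add_of_le' hn
  rw [ss_eq_listSS, ss_eq_listSS, Nat.primeFactorsList_add_two, listSS,
    ← Nat.primeFactorsList_add_two, Nat.prod_primeFactorsList (by omega)]

theorem ss_prime_mul (hr : r.Prime) (hn0 : n ≠ 0) (hn : IsRough r n) :
    SS (r * n) = max (r * (r * n)) (SS n) := by
  have hrn : 1 < r * n := hr.one_lt.trans_le (Nat.le_mul_of_pos_right r hn0.bot_lt)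
  rw [ss_eq_max_minFac_mul hrn, hn.minFac_prime_mul hr, Nat.mul_div_cancel_left n hr.pos]

theorem IsRough.mul_le_ss (hn : IsRough q n) (hn1 : 1 < n) : q * n ≤ SS n := by
  rw [ss_eq_max_minFac_mul hn1]
  exact (Nat.mul_le_mul_right n (hn.le_minFac hn1.ne')).trans (le_max_left _ _)

end SchinzelSzekeres

section DivisorGraph

variable {V : Type*} {G : SimpleGraph V} {s : Set V} {u v w : V}

theorem exists_isPath_of_reachable_induce {hu : u ∈ s} {hv : v ∈ s}
    (huv : (G.induce s).Reachable ⟨u, hu⟩ ⟨v, hv⟩) :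
    ∃ c : G.Walk u v, c.IsPath ∧ ∀ z ∈ c.support, z ∈ s := by
  obtain ⟨c, hc⟩ := huv.exists_isPath
  have hsupport : ∀ z ∈ (c.map (SimpleGraph.Embedding.induce s).toHom).support, z ∈ s := by
    rw [SimpleGraph.Walk.support_map]
    exact List.forall_mem_map.2 fun z _ ↦ z.2
  exact ⟨_, hc.map Subtype.val_injective, hsupport⟩

theorem getVert_concat_of_le_length (c : G.Walk u v) (hvw : G.Adj v w) {i : ℕ}
    (hi : i ≤ c.length) : (c.concat hvw).getVert i = c.getVert i := by
  rw [SimpleGraph.Walk.concat_eq_append, SimpleGraph.Walk.getVert_append', if_pos hi]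

theorem exists_seq_of_reachable_induce {hu : u ∈ s} {hv : v ∈ s}
    (huv : (G.induce s).Reachable ⟨u, hu⟩ ⟨v, hv⟩) (hvw : G.Adj v w) (hw : w ∉ s) :
    ∃ (n : ℕ) (a : ℕ → V), 1 ≤ n ∧ a 1 = u ∧ a n = v ∧ a (n + 1) = w ∧
      Set.InjOn a (Set.Icc 1 (n + 1)) ∧ (∀ i, 1 ≤ i → i ≤ n → a i ∈ s) ∧
      ∀ i, 1 ≤ i → i ≤ n → G.Adj (a i) (a (i + 1)) := by
  obtain ⟨c, hc, hcs⟩ := exists_isPath_of_reachable_induce huv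
  have hpath : (c.concat hvw).IsPath := hc.concat (fun h ↦ hw (hcs w h)) hvw
  have hlen : (c.concat hvw).length = c.length + 1 := c.length_concat hvw
  refine ⟨c.length + 1, fun i ↦ (c.concat hvw).getVert (i - 1), by omega,
    (c.concat hvw).getVert_zero, ?_, ?_, fun i hi j hj hij ↦ ?_, fun i _ hi ↦ ?_,
    fun i hi hi' ↦ ?_⟩
  · exact (getVert_concat_of_le_length c hvw le_rfl).trans c.getVert_length
  · simp only [Nat.add_sub_cancel, ← hlen, SimpleGraph.Walk.getVert_length]
  · obtain ⟨hi, hi'⟩ := hi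
    obtain ⟨hj, hj'⟩ := hj
    have hpred : i - 1 = j - 1 :=
      hpath.getVert_injOn (by grind) (by grind) hij
    omega
  · beta_reduce
    rw [getVert_concat_of_le_length c hvw (Nat.sub_le_of_le_add hi)]
    exact hcs _ (c.getVert_mem_support _)
  · have hadj := (c.concat hvw).adj_getVert_succ (i := i - 1) (by omega)
    rwa [Nat.sub_add_cancel hi] at hadj

/-- The divisor graph, on all of `ℕ`; the vertex `0`, adjacent to every other one, is excluded by
passing to induced subgraphs. -/
def divisorGraph : SimpleGraph ℕ := SimpleGraph.fromRel (· ∣ ·)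

theorem divisorGraph_induce_reachable_of_dvd {s : Set ℕ} {a b : s} (hab : (a : ℕ) ∣ b) :
    (divisorGraph.induce s).Reachable a b := by
  rcases eq_or_ne a b with rfl | hne
  · exact SimpleGraph.Reachable.refl a
  · exact SimpleGraph.Adj.reachable ⟨Subtype.coe_ne_coe.2 hne, Or.inl hab⟩

end DivisorGraph

section SqrtBounds

variable {x : ℝ} {m q r : ℕ}

theorem three_mul_sqrt_lt_of_lt_sq_mul (hx : 0 ≤ x) (hq : q ≤ 3) (hr : (r : ℝ) ≤ √x / 27)
    (h : x < (q ^ 2 * (m * r) : ℕ)) : 3 * √x < m := by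
  have hq9 : (q : ℝ) ^ 2 ≤ 3 ^ 2 := by gcongr; exact_mod_cast hq
  have hlt : √x * √x < √x * (m / 3) := calc
    √x * √x = x := Real.mul_self_sqrt hx
    _ < (q : ℝ) ^ 2 * (m * r) := by exact_mod_cast h
    _ ≤ 3 ^ 2 * (m * (√x / 27)) := by gcongr
    _ = √x * (m / 3) := by ring
  linarith [lt_of_mul_lt_mul_left hlt (Real.sqrt_nonneg x)]

theorem sqrt_mul_lt_mul_of_sqrt_lt {a b : ℝ} (ha : √x < a) (hb : 1 ≤ b) :
    √(x * b) < a * b := calc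
  √(x * b) = √x * √b := Real.sqrt_mul' x (zero_le_one.trans hb)
  _ < a * √b := by gcongr
  _ ≤ a * b := by
    gcongr
    · exact (Real.sqrt_nonneg x).trans ha.le
    · exact Real.sqrt_le_self_iff.2 (Or.inr hb)

theorem three_le_sqrt_div_div (hx : 3 ^ 10 ≤ x) {b : ℝ} (hb0 : 0 < b) (hb : b ≤ √x / 27) :
    3 ≤ √(x / b) / 27 := by
  have hsqrt : 243 ≤ √x := Real.le_sqrt_of_sq_le (by norm_num at hx ⊢; exact hx)
  have hdiv : (3 * 27) ^ 2 ≤ x / b := by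
    rw [le_div_iff₀ hb0]
    calc (3 * 27) ^ 2 * b ≤ (3 * 27) ^ 2 * (√x / 27) := by gcongr
      _ = 243 * √x := by ring
      _ ≤ √x * √x := by gcongr
      _ = x := Real.mul_self_sqrt (by linarith)
  rw [le_div_iff₀ (by norm_num)]
  exact Real.le_sqrt_of_sq_le hdiv

end SqrtBounds

section Stratum

variable {x y : ℝ} {d k n p q : ℕ}

theorem AstarMem.ne_zero (hn : AstarMem x y n) : n ≠ 0 := Nat.ne_zero_of_lt hn.1

theorem AstarMem.nonneg (hn : AstarMem x y n) : 0 ≤ x := (Nat.cast_nonneg _).trans hn.2.2.2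

theorem AstarMem.pmax_le (hn : AstarMem x y n) : (Pmax n : ℝ) ≤ √x / 27 :=
  hn.2.2.1.trans (min_le_right _ _)

theorem AstarMem.of_dvd (hn : AstarMem x y n) (hdn : d ∣ n) (hd : √x < d) : AstarMem x y d := by
  refine ⟨Nat.pos_of_dvd_of_pos hdn hn.1, hd, le_trans ?_ hn.2.2.1, le_trans ?_ hn.2.2.2⟩
  · exact_mod_cast pmax_le_of_dvd hdn hn.ne_zero
  · exact_mod_cast ss_le_of_dvd hdn hn.ne_zero

/-- The integers `n ∈ 𝒜*(x,y)` with `P(n) = p` and `P⁻(n) ≥ q`: every term of the chain except the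
last one lies in this set, for `p = P(A)`. -/
def stratum (x y : ℝ) (p q : ℕ) : Set ℕ := {n | AstarMem x y n ∧ Pmax n = p ∧ IsRough q n}

theorem mem_stratum_of_dvd (hn : n ∈ stratum x y p q) (hp : p.Prime) (hdn : d ∣ n) (hpd : p ∣ d)
    (hd : √x < d) : d ∈ stratum x y p q := by
  obtain ⟨hnA, rfl, hrough⟩ := hn
  have hd0 : d ≠ 0 := ne_zero_of_dvd_ne_zero hnA.ne_zero hdn
  refine ⟨hnA.of_dvd hdn hd, le_antisymm ?_ ?_, hrough.of_dvd hdn⟩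
  · exact pmax_le_of_dvd hdn hnA.ne_zero
  · exact le_pmax_of_prime_dvd hp hpd hd0

theorem mul_le_of_mem_stratum (hn : n ∈ stratum x y p q) (hp : p ≠ 1) : (q * n : ℕ) ≤ x := by
  obtain ⟨hnA, hnp, hrough⟩ := hn
  refine le_trans ?_ hnA.2.2.2
  exact_mod_cast hrough.mul_le_ss (one_lt_of_pmax_ne_one (hnp ▸ hp))

theorem prime_mul_mem_stratum (hn : n ∈ stratum x y p q) (hq : q.Prime) (hqp : q ≤ p)
    (h : (q * (q * n) : ℕ) ≤ x) : q * n ∈ stratum x y p q := by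
  obtain ⟨⟨hn1, hlt, hP, hS⟩, rfl, hrough⟩ := hn
  have hn0 : n ≠ 0 := Nat.ne_zero_of_lt hn1
  have hpmax : Pmax (q * n) = Pmax n := by
    rw [pmax_mul hq.ne_zero hn0, pmax_prime hq, max_eq_right hqp]
  refine ⟨⟨Nat.mul_pos hq.pos hn1, hlt.trans_le ?_, hpmax ▸ hP, ?_⟩, hpmax,
    hrough.prime_mul hq le_rfl⟩
  · exact_mod_cast Nat.le_mul_of_pos_left n hq.pos
  · rw [ss_prime_mul hq hn0 hrough, Nat.cast_max]
    exact max_le h hS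

theorem pow_mul_mem_stratum (hn : n ∈ stratum x y p q) (hq : q.Prime) (hqp : q ≤ p)
    (h : (q ^ (k + 1) * n : ℕ) ≤ x) : q ^ k * n ∈ stratum x y p q := by
  induction k with
  | zero => simpa using hn
  | succ k ih =>
    have hle : q ^ (k + 1) * n ≤ q ^ (k + 2) * n := by
      gcongr
      · exact hq.one_le
      · omega
    have hmem := ih ((Nat.cast_le.2 hle).trans h)
    rw [pow_succ', mul_assoc]
    exact prime_mul_mem_stratum hmem hq hqp (by convert h using 2; ring)

theorem exists_pow_mul_mem_stratum (hn : n ∈ stratum x y p q) (hq : q.Prime) (hqp : q ≤ p) :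
    ∃ k, q ^ k * n ∈ stratum x y p q ∧ x < (q ^ 2 * (q ^ k * n) : ℕ) := by
  have hqn : (0 : ℝ) < (q * n : ℕ) := by
    exact_mod_cast Nat.mul_pos hq.pos hn.1.1
  have hle := mul_le_of_mem_stratum hn (hq.one_lt.trans_le hqp).ne'
  obtain ⟨k, hk, hk'⟩ :=
    exists_nat_pow_near ((one_le_div hqn).2 hle) (Nat.one_lt_cast.2 hq.one_lt)
  rw [le_div_iff₀ hqn] at hk
  rw [div_lt_iff₀ hqn] at hk'
  refine ⟨k, pow_mul_mem_stratum hn hq hqp (le_of_eq_of_le ?_ hk), hk'.trans_eq ?_⟩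
  · push_cast; ring
  · push_cast; ring

theorem exists_reachable_pow_mul_mul (hp : p.Prime) (hq : q.Prime) (hqp : q ≤ p) (hq3 : q ≤ 3)
    (m : ℕ) : ∀ (g : ℕ) (hn : q ^ g * (m * p) ∈ stratum x y p q),
    ∃ (e : ℕ) (he : q ^ e * p ∈ stratum x y p q), x < (q ^ 2 * (q ^ e * p) : ℕ) ∧
      (divisorGraph.induce (stratum x y p q)).Reachable ⟨_, hn⟩ ⟨_, he⟩ := by
  induction m using induction_on_primes with
  | zero => exact fun g hn ↦ absurd (by simp) hn.1.ne_zero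
  | one =>
    intro g hn
    obtain ⟨k, hk, hlt⟩ := exists_pow_mul_mem_stratum hn hq hqp
    have hN : q ^ k * (q ^ g * (1 * p)) = q ^ (k + g) * p := by ring
    rw [hN] at hk hlt
    exact ⟨k + g, hk, hlt, divisorGraph_induce_reachable_of_dvd ⟨q ^ k, by simp only; ring⟩⟩
  | prime_mul r m hr ih =>
    intro g hn
    obtain ⟨k, hk, hlt⟩ := exists_pow_mul_mem_stratum hn hq hqp
    have hN : q ^ k * (q ^ g * (r * m * p)) = q ^ (k + g) * (m * p) * r := by ring
    have hr27 : (r : ℝ) ≤ √x / 27 := by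
      refine le_trans ?_ hk.1.pmax_le
      exact_mod_cast le_pmax_of_prime_dvd hr ⟨_, hN.trans (mul_comm _ r)⟩ hk.1.ne_zero
    have hbig : 3 * √x < (q ^ (k + g) * (m * p) : ℕ) :=
      three_mul_sqrt_lt_of_lt_sq_mul hk.1.nonneg hq3 hr27 (hN ▸ hlt)
    have hquot : q ^ (k + g) * (m * p) ∈ stratum x y p q :=
      mem_stratum_of_dvd hk hp ⟨r, hN⟩ ⟨q ^ (k + g) * m, by ring⟩
        (by linarith [Real.sqrt_nonneg x])
    obtain ⟨e, he, hlt', hreach⟩ := ih (k + g) hquot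
    have hup : (divisorGraph.induce (stratum x y p q)).Reachable ⟨_, hn⟩ ⟨_, hk⟩ :=
      divisorGraph_induce_reachable_of_dvd (dvd_mul_left _ _)
    have hdown : (divisorGraph.induce (stratum x y p q)).Reachable ⟨_, hk⟩ ⟨_, hquot⟩ :=
      (divisorGraph_induce_reachable_of_dvd ⟨r, hN⟩).symm
    exact ⟨e, he, hlt', (hup.trans hdown).trans hreach⟩

theorem exists_reachable_pow_mul (hn : n ∈ stratum x y p q) (hp : p.Prime) (hpn : p ∣ n)
    (hq : q.Prime) (hqp : q ≤ p) (hq3 : q ≤ 3) :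
    ∃ (e : ℕ) (he : q ^ e * p ∈ stratum x y p q), e ≠ 0 ∧ 3 * √x < (q ^ e : ℕ) ∧
      (divisorGraph.induce (stratum x y p q)).Reachable ⟨n, hn⟩ ⟨_, he⟩ := by
  obtain ⟨m, rfl⟩ := exists_eq_mul_left_of_dvd hpn
  obtain ⟨e, he, hlt, hreach⟩ :=
    exists_reachable_pow_mul_mul hp hq hqp hq3 m 0 (by rwa [pow_zero, one_mul])
  simp only [pow_zero, one_mul] at hreach
  have hp27 : (p : ℝ) ≤ √x / 27 := by simpa only [he.2.1] using he.1.pmax_le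
  have hbig := three_mul_sqrt_lt_of_lt_sq_mul he.1.nonneg hq3 hp27 hlt
  refine ⟨e, he, ?_, hbig, hreach⟩
  rintro rfl
  have hp1 : (1 : ℝ) ≤ p := by exact_mod_cast hp.one_le
  rw [pow_zero, Nat.cast_one] at hbig
  linarith

end Stratum

/-- Lemma 8.1: let `q ∈ {2,3}`, `y ≥ 3`, `x ≥ 3¹⁰`, and let `A ∈ 𝒜*(x,y)` with
`q < P(A) ≤ √x/27` and `P⁻(A) ≥ q`. Then there is a chain `A = a₁ − ⋯ − a_s` of at
least two integers of `𝒜*(x,y)` with: `P(a_j) = P(A)` for `1 ≤ j < s`; `P(a_s) = q`;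
`P⁻(a_j) ≥ q` for `1 ≤ j ≤ s`; `a_{s-1} > √(x P(a_{s-1}))`;
`P(a_{s-1}/P(a_{s-1})) ≤ √(x/P(a_{s-1}))/27`; and `a_s > 3√x`. -/
theorem stmt_12 (q : ℕ) (hq : q = 2 ∨ q = 3) (x y : ℝ) (hy : 3 ≤ y) (hx : (3 : ℝ) ^ 10 ≤ x)
    (A : ℕ) (hA : AstarMem x y A) (hqA : q < Pmax A)
    (hPA : (Pmax A : ℝ) ≤ Real.sqrt x / 27)
    (hminA : ∀ r : ℕ, r.Prime → r ∣ A → q ≤ r) :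
    ∃ s : ℕ, ∃ a : ℕ → ℕ, 2 ≤ s ∧ a 1 = A ∧
      (∀ i j, 1 ≤ i → i ≤ s → 1 ≤ j → j ≤ s → i ≠ j → a i ≠ a j) ∧
      (∀ i, 1 ≤ i → i < s → (a i ∣ a (i + 1) ∨ a (i + 1) ∣ a i)) ∧
      (∀ i, 1 ≤ i → i ≤ s → AstarMem x y (a i)) ∧
      (∀ j, 1 ≤ j → j < s → Pmax (a j) = Pmax A) ∧
      Pmax (a s) = q ∧
      (∀ j, 1 ≤ j → j ≤ s → ∀ r : ℕ, r.Prime → r ∣ a j → q ≤ r) ∧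
      Real.sqrt (x * (Pmax (a (s - 1)) : ℝ)) < (a (s - 1) : ℝ) ∧
      (Pmax (a (s - 1) / Pmax (a (s - 1))) : ℝ) ≤ Real.sqrt (x / (Pmax (a (s - 1)) : ℝ)) / 27 ∧
      3 * Real.sqrt x < (a s : ℝ) := by
  have hqP : q.Prime := by rcases hq with rfl | rfl <;> norm_num
  have hA1 : 1 < A := one_lt_of_pmax_ne_one (hqP.one_lt.trans hqA).ne'
  obtain ⟨hpP, hpA, -⟩ := Nat.mem_primeFactors.1 (pmax_mem_primeFactors hA1)
  obtain ⟨e, hlast, he0, hbig, hreach⟩ := exists_reachable_pow_mul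
    ⟨hA, rfl, hminA⟩ hpP hpA hqP hqA.le (by omega)
  have hPq : Pmax (q ^ e) = q := pmax_prime_pow hqP he0
  have hq_notMem : q ^ e ∉ stratum x y (Pmax A) q := fun h ↦ hqA.ne (hPq.symm.trans h.2.1)
  have hadj : divisorGraph.Adj (q ^ e * Pmax A) (q ^ e) :=
    ⟨fun h ↦ hq_notMem (h ▸ hlast), Or.inr (dvd_mul_right _ _)⟩
  have hsqrt : √x < (q ^ e : ℕ) := by linarith [Real.sqrt_nonneg x]
  obtain ⟨n, a, hn, ha1, han, haq, hinj, hmem, hedge⟩ :=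
    exists_seq_of_reachable_induce hreach hadj hq_notMem
  have hAstar_rough : ∀ i, 1 ≤ i → i ≤ n + 1 → AstarMem x y (a i) ∧ IsRough q (a i) := by
    intro i hi hi'
    obtain hi' | rfl := Nat.le_succ_iff.1 hi'
    · exact ⟨(hmem i hi hi').1, (hmem i hi hi').2.2⟩
    · exact haq ▸ ⟨hlast.1.of_dvd (dvd_mul_right _ _) hsqrt, hlast.2.2.of_dvd (dvd_mul_right _ _)⟩
  refine ⟨n + 1, a, by omega, ha1, fun i j hi hi' hj hj' ↦ (hinj.ne_iff ⟨hi, hi'⟩ ⟨hj, hj'⟩).2,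
    fun i hi hi' ↦ (hedge i hi (by omega)).2, fun i hi hi' ↦ (hAstar_rough i hi hi').1,
    fun j hj hj' ↦ (hmem j hj (by omega)).2.1, haq ▸ hPq,
    fun j hj hj' ↦ (hAstar_rough j hj hj').2, ?_, ?_, haq ▸ hbig⟩ <;>
    rw [Nat.add_sub_cancel, han, hlast.2.1]
  · rw [Nat.cast_mul]
    exact sqrt_mul_lt_mul_of_sqrt_lt hsqrt (Nat.one_le_cast.2 hpP.one_le)
  · rw [Nat.mul_div_cancel _ hpP.pos, hPq]
    refine le_trans ?_ (three_le_sqrt_div_div hx (Nat.cast_pos.2 hpP.pos) hPA)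
    norm_cast; omega
end

section
/- For all real x ≥ 2, one has A(x) ≥ D(x/2, 2) and A'(x) ≥ D'(x/2, 2). -/
/-- `maxRatio n` is the maximum ratio of consecutive divisors of `n`
(with the convention that it equals `1` for `n = 1`). -/
noncomputable def maxRatio (n : ℕ) : ℝ :=
  (((n.divisors.sort (· ≤ ·)).zip (n.divisors.sort (· ≤ ·)).tail).map
    (fun p => (p.2 : ℝ) / (p.1 : ℝ))).foldr max 1

/-- `Acard x = #{n ≥ 1 : S(n) ≤ x}`. -/
noncomputable def Acard (x : ℝ) : ℕ := {n : ℕ | 1 ≤ n ∧ (SS n : ℝ) ≤ x}.ncard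

/-- `A'card x = #{n ≥ 1 : S(n) ≤ x and n squarefree}`. -/
noncomputable def A'card (x : ℝ) : ℕ :=
  {n : ℕ | 1 ≤ n ∧ (SS n : ℝ) ≤ x ∧ Squarefree n}.ncard

/-- `Dcard x t = #{n ≤ x : max_{1 ≤ i < τ(n)} d_{i+1}(n)/d_i(n) ≤ t}`. -/
noncomputable def Dcard (x t : ℝ) : ℕ :=
  {n : ℕ | 1 ≤ n ∧ (n : ℝ) ≤ x ∧ maxRatio n ≤ t}.ncard

/-- `D'card x t = #{n ≤ x : max_{1 ≤ i < τ(n)} d_{i+1}(n)/d_i(n) ≤ t and n squarefree}`. -/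
noncomputable def D'card (x t : ℝ) : ℕ :=
  {n : ℕ | 1 ≤ n ∧ (n : ℝ) ≤ x ∧ maxRatio n ≤ t ∧ Squarefree n}.ncard

/-!
If `n = m d` with `d > 1`, the divisor `e` of `n` that follows `m` satisfies
`m < e ≤ maxRatio n * m`. Since `e` does not divide `m`, it shares a prime with `d`, so the least
prime factor of `d` is at most `maxRatio n * m`. Each product in the definition of `SS n` has the
form `d.minFac * d` with `d ∣ n`, hence `SS n ≤ maxRatio n * n`.
-/

theorem le_foldr_max {α : Type*} [LinearOrder α] (l : List α) (b : α) : b ≤ l.foldr max b := by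
  induction l with
  | nil => exact le_rfl
  | cons a l ih => exact le_max_of_le_right ih

theorem foldr_max_eq_or_mem {α : Type*} [LinearOrder α] (l : List α) (b : α) :
    l.foldr max b = b ∨ l.foldr max b ∈ l := by
  induction l with
  | nil => exact .inl rfl
  | cons a l ih => grind

theorem exists_mem_zip_tail_of_lt {α : Type*} [Preorder α] {l : List α} (hl : l.SortedLT)
    {a b : α} (ha : a ∈ l) (hb : b ∈ l) (hab : a < b) : ∃ c, a < c ∧ (a, c) ∈ l.zip l.tail := by
  induction l with
  | nil => exact absurd ha List.not_mem_nil
  | cons x l ih =>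
    obtain ⟨hx, hl⟩ := List.pairwise_cons.1 hl.pairwise
    have hbl : b ∈ l := by
      refine (List.mem_cons.1 hb).resolve_left fun hbx => ?_
      rcases List.mem_cons.1 ha with rfl | ha
      · exact hab.ne' hbx
      · exact lt_asymm hab (hbx ▸ hx a ha)
    obtain ⟨y, l, rfl⟩ := List.exists_cons_of_ne_nil (List.ne_nil_of_mem hbl)
    rcases List.mem_cons.1 ha with rfl | ha
    · exact ⟨y, hx y List.mem_cons_self, List.mem_cons_self⟩
    · obtain ⟨c, hac, hc⟩ := ih hl.sortedLT ha hbl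
      exact ⟨c, hac, List.mem_cons_of_mem _ hc⟩

theorem one_le_maxRatio (n : ℕ) : 1 ≤ maxRatio n :=
  le_foldr_max _ 1

theorem exists_dvd_lt_le_maxRatio_mul {m n : ℕ} (hm : m ∣ n) (hmn : m < n) :
    ∃ e, e ∣ n ∧ m < e ∧ (e : ℝ) ≤ maxRatio n * m := by
  have hn : n ≠ 0 := Nat.ne_zero_of_lt hmn
  have hm0 : (0 : ℝ) < m := mod_cast Nat.pos_of_dvd_of_pos hm hn.bot_lt
  have mem_sort {d : ℕ} : d ∈ n.divisors.sort (· ≤ ·) ↔ d ∣ n := by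
    rw [Finset.mem_sort, Nat.mem_divisors, and_iff_left hn]
  obtain ⟨e, hme, hpair⟩ :=
    exists_mem_zip_tail_of_lt (Finset.sortedLT_sort _) (mem_sort.2 hm) (mem_sort.2 dvd_rfl) hmn
  have hratio : (e : ℝ) / m ≤ maxRatio n :=
    List.le_max_of_le' _ (List.mem_map_of_mem hpair) le_rfl
  exact ⟨e, mem_sort.1 (List.mem_of_mem_tail (List.of_mem_zip hpair).2), hme,
    (div_le_iff₀ hm0).1 hratio⟩

theorem minFac_le_maxRatio_mul {m d : ℕ} (hmd : m * d ≠ 0) :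
    (d.minFac : ℝ) ≤ maxRatio (m * d) * m := by
  obtain ⟨hm, hd⟩ := mul_ne_zero_iff.1 hmd
  rcases eq_or_ne d 1 with rfl | hd1
  · rw [Nat.minFac_one, Nat.cast_one]
    exact one_le_mul_of_one_le_of_one_le (one_le_maxRatio _) (mod_cast hm.bot_lt)
  obtain ⟨e, he, hme, hle⟩ := exists_dvd_lt_le_maxRatio_mul (Nat.dvd_mul_right m d)
    (lt_mul_of_one_lt_right hm.bot_lt (by lia))
  have not_coprime : ¬ e.Coprime d := fun h =>
    hme.not_ge (Nat.le_of_dvd hm.bot_lt (h.dvd_of_dvd_mul_right he))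
  obtain ⟨q, hq, hqe, hqd⟩ := Nat.Prime.not_coprime_iff_dvd.1 not_coprime
  have minFac_le : d.minFac ≤ e :=
    (Nat.minFac_le_of_dvd hq.two_le hqd).trans (Nat.le_of_dvd (pos_of_gt hme) hqe)
  exact le_trans (mod_cast minFac_le) hle

theorem headI_eq_minFac_prod {l : List ℕ} (hne : l ≠ []) (hsorted : l.SortedLE)
    (hprime : ∀ p ∈ l, p.Prime) : l.headI = l.prod.minFac := by
  obtain ⟨p, l, rfl⟩ := List.exists_cons_of_ne_nil hne
  have hp : p.Prime := hprime p List.mem_cons_self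
  have hdvd : p ∣ (p :: l).prod := List.dvd_prod List.mem_cons_self
  have hminFac : (p :: l).prod.minFac ∈ p :: l :=
    mem_list_primes_of_dvd_prod (Nat.minFac_prime fun h => hp.not_dvd_one (h ▸ hdvd)).prime
      (fun q hq => (hprime q hq).prime) (Nat.minFac_dvd _)
  refine le_antisymm ?_ (Nat.minFac_le_of_dvd hp.two_le hdvd)
  rcases List.mem_cons.1 hminFac with h | h
  · exact h.ge
  · exact (List.pairwise_cons.1 hsorted.pairwise).1 _ h

theorem headI_drop_primeFactorsList {n j : ℕ} (hj : j < n.primeFactorsList.length) :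
    (n.primeFactorsList.drop j).headI = (n.primeFactorsList.drop j).prod.minFac :=
  headI_eq_minFac_prod (List.drop_eq_nil_iff.not.2 hj.not_ge)
    ((Nat.primeFactorsList_sorted n).pairwise.sublist (List.drop_sublist j _)).sortedLE
    fun _ hp => Nat.prime_of_mem_primeFactorsList (List.mem_of_mem_drop hp)

theorem exists_dvd_SS_eq (n : ℕ) : ∃ d, d ∣ n ∧ SS n = d.minFac * d := by
  rcases foldr_max_eq_or_mem _ 1 with h | h
  · exact ⟨1, one_dvd n, h.trans (by rw [Nat.minFac_one])⟩
  · obtain ⟨j, hj, hSS⟩ := List.mem_map.1 h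
    have hj : j < n.primeFactorsList.length := List.mem_range.1 hj
    have hn : n ≠ 0 := by
      rintro rfl
      simp at hj
    refine ⟨(n.primeFactorsList.drop j).prod, ?_, ?_⟩
    · exact (List.drop_sublist j _).prod_dvd_prod.trans (Nat.prod_primeFactorsList hn).dvd
    · rw [← headI_drop_primeFactorsList hj]
      exact hSS.symm

theorem le_SS (n : ℕ) : n ≤ SS n := by
  rcases Nat.lt_or_ge 1 n with hn | hn
  · have hlen : 0 < n.primeFactorsList.length :=
      List.length_pos_of_ne_nil ((Nat.primeFactorsList_ne_nil n).2 hn)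
    refine List.le_max_of_le' 1 (List.mem_map_of_mem (List.mem_range.2 hlen)) ?_
    rw [headI_drop_primeFactorsList hlen, List.drop_zero, Nat.prod_primeFactorsList (by lia)]
    exact Nat.le_mul_of_pos_left n n.minFac_pos
  · exact hn.trans (le_foldr_max _ 1)

theorem finite_setOf_SS_le (x : ℝ) : {n : ℕ | (SS n : ℝ) ≤ x}.Finite :=
  (Set.finite_Iic ⌊x⌋₊).subset fun n hn => (le_SS n).trans (Nat.le_floor hn)

theorem SS_le_maxRatio_mul {n : ℕ} (hn : n ≠ 0) : (SS n : ℝ) ≤ maxRatio n * n := by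
  obtain ⟨d, ⟨m, rfl⟩, hSS⟩ := exists_dvd_SS_eq n
  rw [mul_comm] at hn
  calc (SS (d * m) : ℝ) = d.minFac * d := by rw [hSS, Nat.cast_mul]
    _ ≤ maxRatio (m * d) * m * d := by gcongr; exact minFac_le_maxRatio_mul hn
    _ = maxRatio (d * m) * ↑(d * m) := by rw [mul_comm m d]; push_cast; ring

theorem SS_le_mul_of_maxRatio_le {n : ℕ} {x t : ℝ} (hn : n ≠ 0) (hnx : (n : ℝ) ≤ x)
    (ht : maxRatio n ≤ t) : (SS n : ℝ) ≤ t * x :=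
  (SS_le_maxRatio_mul hn).trans <|
    mul_le_mul ht hnx n.cast_nonneg (zero_le_one.trans ((one_le_maxRatio n).trans ht))

theorem stmt_18_general (x t : ℝ) :
    Dcard x t ≤ Acard (t * x) ∧ D'card x t ≤ A'card (t * x) := by
  constructor
  · refine Set.ncard_le_ncard ?_ ((finite_setOf_SS_le (t * x)).subset fun n hn => hn.2)
    rintro n ⟨hn, hnx, ht⟩
    exact ⟨hn, SS_le_mul_of_maxRatio_le (Nat.ne_zero_of_lt hn) hnx ht⟩
  · refine Set.ncard_le_ncard ?_ ((finite_setOf_SS_le (t * x)).subset fun n hn => hn.2.1)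
    rintro n ⟨hn, hnx, ht, hsq⟩
    exact ⟨hn, SS_le_mul_of_maxRatio_le (Nat.ne_zero_of_lt hn) hnx ht, hsq⟩

/-- For all real `x ≥ 2`, one has `A(x) ≥ D(x/2, 2)` and `A'(x) ≥ D'(x/2, 2)`. -/
theorem stmt_18 (x : ℝ) (hx : 2 ≤ x) :
    Dcard (x / 2) 2 ≤ Acard x ∧ D'card (x / 2) 2 ≤ A'card x := by
  simpa only [mul_div_cancel₀ x two_ne_zero] using stmt_18_general (x / 2) 2
end
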